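/- arXiv:math/0411228 — 5 statements merged into one kernel-verified Lean document; each statement's English description precedes it below -/
import Mathlib

section
/- Let A be a level standard graded artinian algebra of type 2, codimension r with 2 ≤ r ≤ 7, and socle degree e ≥ 2 over k, with h-vector (1, r, …, h_{e-1}, 2). Then h_{e-1} ≥ r. -/
/-! A level algebra `A` of type `2` is encoded by a basis `l, g` of the dual of `A_e`, that is, by two
forms `F, G` of degree `e` on which the elements of `A_1` act as derivations. For a functional
`l`, let `W_l` be the space of `w ∈ A_1` with `l (w A_{e-1}) = 0` (the linear annihilators of `F`),
and let `Y_l` be the space of `y ∈ A_1` with `y W_l = 0` in `A`. Levelness says that an element of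
degree `j ≤ e` is zero as soon as it is killed by `A_{e-j}`.

Suppose that `h_{e-1} < r`. Then each of the functionals `l`, `g`, `l + g` satisfies
`dim W ≥ 3` and `codim Y ≥ 2`:
* counting the relations `y G = y' F` in the space `(A_{e-1})^*` of dimension `h_{e-1} < r` gives
  `codim Y_l < dim W_l` (`two_mul_finrank_le`), because such a `y` lies in `Y_l`;
* in particular `W_l ≠ 0`, and then `Y_l ≠ A_1` since `W_l` does not meet the socle;
* if `Y_l` has codimension one with complement spanned by `z`, then `w ↦ w z ^ (e - 1)` embeds
  `W_l` in the line `A_e ∩ ker l`, so `dim W_l ≤ 1` (`finrank_ker_le_one`), against the first point.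

For independent functionals `l, l'` one has `W_l W_{l'} = 0` and `W_l ∩ W_{l'} = 0`. Hence `Y_l`
contains the direct sum of `W_g` and `W_{l+g}`, and `r ≥ 2 + 3 + 3 = 8` (`eight_le_finrank`). -/

open MvPolynomial

/-- The degree-`d` graded piece of the quotient `k[x_1,…,x_r]/I`, realized as the image of
the space of homogeneous polynomials of degree `d` in the quotient. -/
noncomputable def quotPiece (k : Type) [Field k] (r : ℕ)
    (I : Ideal (MvPolynomial (Fin r) k)) (d : ℕ) :
    Submodule k (MvPolynomial (Fin r) k ⧸ I) :=
  (homogeneousSubmodule (Fin r) k d).map (Ideal.Quotient.mkₐ k I).toLinearMap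

/-- The Hilbert function of the quotient `k[x_1,…,x_r]/I`. -/
noncomputable def hilb (k : Type) [Field k] (r : ℕ)
    (I : Ideal (MvPolynomial (Fin r) k)) (d : ℕ) : ℕ :=
  Module.finrank k (quotPiece k r I d)

/-- `A = k[x_1,…,x_r]/I` is a level standard graded artinian algebra of socle degree `e` and
type `t`: the ideal `I` is homogeneous, the Hilbert function of `A` vanishes in degrees `> e`
and equals `t` in degree `e`, and the socle of `A` (the annihilator of the irrelevant maximal
ideal) coincides with the degree-`e` graded piece `A_e`. -/
def IsLevelQuot (k : Type) [Field k] (r e t : ℕ)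
    (I : Ideal (MvPolynomial (Fin r) k)) : Prop :=
  (∀ f ∈ I, ∀ d, homogeneousComponent d f ∈ I) ∧
  (∀ d, e < d → hilb k r I d = 0) ∧
  hilb k r I e = t ∧
  {a : MvPolynomial (Fin r) k ⧸ I | ∀ i, a * Ideal.Quotient.mk I (X i) = 0} =
    (quotPiece k r I e : Set (MvPolynomial (Fin r) k ⧸ I))

/-! ### Linear algebra of the socle pairing -/

section LevelAlgebra

variable {K A : Type*} [Field K] [CommRing A] [Algebra K A] (P : ℕ → Submodule K A) (e : ℕ)

/-- For a functional `l` on `A`, the map `A_1 → (A_{e-1})^*` sending `x` to `b ↦ l (x b)`.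
In terms of Macaulay's inverse system, it sends a linear operator `x` to the derivative by `x`
of the form of degree `e` dual to `l`. -/
noncomputable def socPair (l : A →ₗ[K] K) : P 1 →ₗ[K] Module.Dual K (P (e - 1)) :=
  ((LinearMap.mul K A).compr₂ l).domRestrict₁₂ (P 1) (P (e - 1))

@[simp] lemma socPair_apply (l : A →ₗ[K] K) (x : P 1) (b : P (e - 1)) :
    socPair P e l x b = l ((x : A) * b) := rfl

/-- The linear elements of `A` annihilating a given space `W` of linear elements. -/
def annLin (W : Submodule K (P 1)) : Submodule K (P 1) where
  carrier := {y | ∀ w ∈ W, (y : A) * (w : A) = 0}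
  add_mem' {a b} ha hb w hw := by
    simp [add_mul, ha w hw, hb w hw]
  zero_mem' w hw := by simp
  smul_mem' c a ha w hw := by
    simp [ha w hw]

variable {P e}

lemma mem_annLin {W : Submodule K (P 1)} {y : P 1} :
    y ∈ annLin P W ↔ ∀ w ∈ W, (y : A) * (w : A) = 0 := Iff.rfl

/-- In a level algebra an element of degree `j ≤ e` killed by `A_{e-j}` is zero. -/
lemma eq_zero_of_mul_eq_zero (hone : (1 : A) ∈ P 0)
    (hmul : ∀ i j a b, a ∈ P i → b ∈ P j → a * b ∈ P (i + j))
    (hsoc : ∀ j < e, ∀ a ∈ P j, (∀ x ∈ P 1, a * x = 0) → a = 0)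
    (n : ℕ) : ∀ j, j + n = e → ∀ a ∈ P j, (∀ b ∈ P n, a * b = 0) → a = 0 := by
  induction n with
  | zero => intro j _ a _ h; simpa using h 1 hone
  | succ n ih =>
    intro j hj a ha h
    refine hsoc j (by omega) a ha fun x hx => ?_
    refine ih (j + 1) (by omega) _ (hmul _ _ _ _ ha hx) fun b hb => ?_
    rw [mul_assoc]
    exact h _ (by rw [add_comm n 1]; exact hmul _ _ _ _ hx hb)

section

variable (he : 2 ≤ e) (hone : (1 : A) ∈ P 0)
    (hmul : ∀ i j a b, a ∈ P i → b ∈ P j → a * b ∈ P (i + j))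
    (hsoc : ∀ j < e, ∀ a ∈ P j, (∀ x ∈ P 1, a * x = 0) → a = 0)
    {l g : A →ₗ[K] K} (hsep : ∀ a ∈ P e, l a = 0 → g a = 0 → a = 0)

include he hone hmul hsoc hsep

/-- If the derivative by `y` of the dual form of `g` is also a derivative of the dual form of
`l`, then `y` annihilates every linear element `w` annihilating the latter form. -/
lemma mul_eq_zero_of_socPair_eq {y y' w : P 1} (h : socPair P e g y = socPair P e l y')
    (hw : socPair P e l w = 0) : (y : A) * (w : A) = 0 := by
  refine eq_zero_of_mul_eq_zero hone hmul hsoc (e - 2) 2 (by omega) _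
    (hmul 1 1 _ _ y.2 w.2) fun b hb => ?_
  have hl : ∀ c : P 1, (c : A) * b ∈ P (e - 1) := fun c => by
    have := hmul _ _ _ _ c.2 hb
    rwa [show 1 + (e - 2) = e - 1 by omega] at this
  have hmem : (y : A) * w * b ∈ P e := by
    have := hmul _ _ _ _ (hmul 1 1 _ _ y.2 w.2) hb
    rwa [show 1 + 1 + (e - 2) = e by omega] at this
  refine hsep _ hmem ?_ ?_
  · have := LinearMap.congr_fun hw ⟨_, hl y⟩
    simp only [socPair_apply, LinearMap.zero_apply] at this
    rw [← this]; congr 1; ring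
  · have h1 := LinearMap.congr_fun h ⟨_, hl w⟩
    have h2 := LinearMap.congr_fun hw ⟨_, hl y'⟩
    simp only [socPair_apply, LinearMap.zero_apply] at h1 h2
    rw [mul_assoc, h1, ← h2]; congr 1; ring

/-- The dual forms of `l` and `g` have no common linear annihilator. -/
lemma ker_socPair_inf_ker :
    LinearMap.ker (socPair P e l) ⊓ LinearMap.ker (socPair P e g) = ⊥ := by
  rw [eq_bot_iff]
  rintro x ⟨h1, h2⟩
  rw [SetLike.mem_coe, LinearMap.mem_ker] at h1 h2
  rw [Submodule.mem_bot]
  ext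
  refine eq_zero_of_mul_eq_zero hone hmul hsoc (e - 1) 1 (by omega) _ x.2 fun b hb => ?_
  have hmem := hmul _ _ _ _ x.2 hb
  rw [show 1 + (e - 1) = e by omega] at hmem
  exact hsep _ hmem (LinearMap.congr_fun h1 ⟨b, hb⟩) (LinearMap.congr_fun h2 ⟨b, hb⟩)

/-- Linear annihilators of the independent forms dual to `l` and `g` multiply to zero. -/
lemma ker_socPair_le_annLin :
    LinearMap.ker (socPair P e g) ≤ annLin P (LinearMap.ker (socPair P e l)) := by
  intro y hy w hw
  rw [LinearMap.mem_ker] at hy hw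
  exact mul_eq_zero_of_socPair_eq he hone hmul hsoc hsep (y' := 0) (by rw [hy, map_zero]) hw

/-- If the annihilator of the space `W` of linear annihilators of the dual form of `l` is a
hyperplane with complement spanned by `z`, then `w ∈ W` is determined by `w z ^ (e - 1)`, which
lies in the line `A_e ∩ ker l`; so `W` is at most a line. -/
lemma finrank_ker_le_one {z : P 1}
    (hz : annLin P (LinearMap.ker (socPair P e l)) ⊔ K ∙ z = ⊤) :
    Module.finrank K (LinearMap.ker (socPair P e l)) ≤ 1 := by
  have hpow : ∀ j, (z : A) ^ j ∈ P j := by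
    intro j
    induction j with
    | zero => simpa using hone
    | succ j ih => rw [pow_succ]; exact hmul _ _ _ _ ih z.2
  have hdesc : ∀ w ∈ LinearMap.ker (socPair P e l), ∀ j, j ≤ e - 1 →
      (w : A) * (z : A) ^ j = 0 → (w : A) = 0 := by
    intro w hw j
    induction j with
    | zero => intro _ h; simpa using h
    | succ j ih =>
      intro hj h
      refine ih (by omega) (hsoc (1 + j) (by omega) _ (hmul _ _ _ _ w.2 (hpow j)) fun x hx => ?_)
      have hx' : (⟨x, hx⟩ : P 1) ∈ annLin P (LinearMap.ker (socPair P e l)) ⊔ K ∙ z :=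
        hz ▸ Submodule.mem_top
      obtain ⟨y, hy, u, hu, hyu⟩ := Submodule.mem_sup.1 hx'
      obtain ⟨c, rfl⟩ := Submodule.mem_span_singleton.1 hu
      have hxe : x = (y : A) + c • (z : A) := (congrArg Subtype.val hyu).symm
      have hyw := hy w hw
      rw [hxe, mul_add, mul_smul_comm, mul_assoc _ _ (z : A), ← pow_succ, h, smul_zero, add_zero,
        mul_right_comm, mul_comm (w : A), hyw, zero_mul]
  have hmem : ∀ w : P 1, (w : A) * (z : A) ^ (e - 1) ∈ P e := fun w => by
    have := hmul _ _ _ _ w.2 (hpow (e - 1))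
    rwa [show 1 + (e - 1) = e by omega] at this
  have hinj := LinearMap.finrank_le_finrank_of_injective
    (f := (g ∘ₗ (LinearMap.mulRight K ((z : A) ^ (e - 1))) ∘ₗ (P 1).subtype ∘ₗ
      (LinearMap.ker (socPair P e l)).subtype)) ?_
  · simpa using hinj
  · refine (injective_iff_map_eq_zero _).2 fun w hw => ?_
    have h1 : l ((w : A) * (z : A) ^ (e - 1)) = 0 :=
      LinearMap.congr_fun (LinearMap.mem_ker.1 w.2) ⟨_, hpow (e - 1)⟩
    have h2 : g ((w : A) * (z : A) ^ (e - 1)) = 0 := hw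
    exact Subtype.ext (Subtype.ext
      (hdesc w.1 w.2 (e - 1) le_rfl (hsep _ (hmem w.1) h1 h2)))

variable [FiniteDimensional K (P 1)] [FiniteDimensional K (P (e - 1))]

/-- Count of the relations `y G = y' F`, where `F` and `G` are the dual forms of `l` and `g`:
there are at least `2 h_1 - h_{e-1}` of them, the components `y` lie in the annihilator of `W`,
the space of linear annihilators of `F`, and for given `y` the component `y'` is determined
modulo `W`. -/
lemma two_mul_finrank_le :
    2 * Module.finrank K (P 1) ≤ Module.finrank K (P (e - 1)) +
      (Module.finrank K (annLin P (LinearMap.ker (socPair P e l))) +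
        Module.finrank K (LinearMap.ker (socPair P e l))) := by
  set Φ := (socPair P e g).coprod (-(socPair P e l)) with hΦ
  have hmem : ∀ p, p ∈ LinearMap.ker Φ → socPair P e g p.1 = socPair P e l p.2 := by
    intro p hp
    rw [LinearMap.mem_ker, hΦ, LinearMap.coprod_apply, LinearMap.neg_apply] at hp
    exact add_neg_eq_zero.1 hp
  have h1 := LinearMap.finrank_range_add_finrank_ker Φ
  have h2 : Module.finrank K (LinearMap.range Φ) ≤ Module.finrank K (P (e - 1)) := by
    rw [← Subspace.dual_finrank_eq (K := K) (V := P (e - 1))]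
    exact Submodule.finrank_le _
  rw [Module.finrank_prod] at h1
  set π := (LinearMap.fst K (P 1) (P 1)).domRestrict (LinearMap.ker Φ) with hπ
  have h3 := LinearMap.finrank_range_add_finrank_ker (K := K) (V := LinearMap.ker Φ) (V₂ := P 1) π
  have h4 : Module.finrank K (LinearMap.range π) ≤
      Module.finrank K (annLin P (LinearMap.ker (socPair P e l))) := by
    refine Submodule.finrank_mono ?_
    rintro _ ⟨p, rfl⟩ w hw
    exact mul_eq_zero_of_socPair_eq he hone hmul hsoc hsep (hmem p.1 p.2) hw
  have h5 : Module.finrank K (LinearMap.ker π) ≤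
      Module.finrank K (LinearMap.ker (socPair P e l)) := by
    have hz : ∀ q : LinearMap.ker π, q.1.1.1 = 0 := fun q => q.2
    refine LinearMap.finrank_le_finrank_of_injective
      (f := ((LinearMap.snd K (P 1) (P 1)) ∘ₗ (LinearMap.ker Φ).subtype ∘ₗ
        (LinearMap.ker π).subtype).codRestrict (LinearMap.ker (socPair P e l)) ?_) ?_
    · intro q
      have := hmem q.1.1 q.1.2
      rw [hz q, map_zero] at this
      exact this.symm
    · intro q q' hqq
      have h : q.1.1.2 = q'.1.1.2 := congrArg Subtype.val hqq
      exact Subtype.ext (Subtype.ext (Prod.ext ((hz q).trans (hz q').symm) h))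
  omega

/-- If `h_{e-1} < h_1`, then the space `W` of linear annihilators of the dual form of `l` has
dimension at least three, and the annihilator of `W` in `A_1` has codimension at least two. -/
lemma three_le_finrank_ker (hlt : Module.finrank K (P (e - 1)) < Module.finrank K (P 1)) :
    3 ≤ Module.finrank K (LinearMap.ker (socPair P e l)) ∧
      Module.finrank K (annLin P (LinearMap.ker (socPair P e l))) + 2 ≤
        Module.finrank K (P 1) := by
  have hcount := two_mul_finrank_le he hone hmul hsoc hsep
  set W := LinearMap.ker (socPair P e l) with hW
  have hYle := Submodule.finrank_le (annLin P W)
  have hWne : W ≠ ⊥ := by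
    intro h
    rw [h, finrank_bot] at hcount
    have := Submodule.finrank_le (annLin P (⊥ : Submodule K (P 1)))
    omega
  obtain ⟨w, hw, hw0⟩ := Submodule.exists_mem_ne_zero_of_ne_bot hWne
  obtain ⟨z, hz⟩ : ∃ z, z ∉ annLin P W := by
    by_contra! hall
    refine hw0 (Subtype.ext (hsoc 1 (by omega) _ w.2 fun x hx => ?_))
    rw [mul_comm]
    exact hall ⟨x, hx⟩ w hw
  have hlt' : annLin P W < annLin P W ⊔ K ∙ z :=
    lt_of_le_of_ne le_sup_left fun h => hz (h ▸ Submodule.mem_sup_right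
      (Submodule.mem_span_singleton_self z))
  have h1 := Submodule.finrank_lt_finrank_of_lt hlt'
  have h2 := Submodule.finrank_le (annLin P W ⊔ K ∙ z)
  have h3 : Module.finrank K (annLin P W) + 2 ≤ Module.finrank K (P 1) := by
    by_contra hcon
    have htop : annLin P W ⊔ K ∙ z = ⊤ :=
      Submodule.eq_top_of_finrank_eq (by omega)
    have := finrank_ker_le_one he hone hmul hsoc hsep htop
    rw [← hW] at this
    omega
  omega

/-- The three forms dual to `l`, `g`, `l + g` give the bound `h_1 ≥ 8` when `h_{e-1} < h_1`. -/
lemma eight_le_finrank (hlt : Module.finrank K (P (e - 1)) < Module.finrank K (P 1)) :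
    8 ≤ Module.finrank K (P 1) := by
  have s1 : ∀ a ∈ P e, g a = 0 → l a = 0 → a = 0 := fun a ha h h' => hsep a ha h' h
  have s2 : ∀ a ∈ P e, l a = 0 → (l + g) a = 0 → a = 0 := fun a ha h h' =>
    hsep a ha h (by simpa [h] using h')
  have s3 : ∀ a ∈ P e, g a = 0 → (l + g) a = 0 → a = 0 := fun a ha h h' =>
    hsep a ha (by simpa [h] using h') h
  have s4 : ∀ a ∈ P e, (l + g) a = 0 → g a = 0 → a = 0 := fun a ha h h' => s3 a ha h' h
  obtain ⟨-, t1⟩ := three_le_finrank_ker he hone hmul hsoc hsep hlt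
  obtain ⟨t2, -⟩ := three_le_finrank_ker he hone hmul hsoc s1 hlt
  obtain ⟨t3, -⟩ := three_le_finrank_ker he hone hmul hsoc s4 hlt
  have hle := sup_le (ker_socPair_le_annLin he hone hmul hsoc hsep)
    (ker_socPair_le_annLin he hone hmul hsoc s2)
  have hsum := Submodule.finrank_sup_add_finrank_inf_eq (LinearMap.ker (socPair P e g))
    (LinearMap.ker (socPair P e (l + g)))
  rw [ker_socPair_inf_ker he hone hmul hsoc s3, finrank_bot] at hsum
  have := Submodule.finrank_mono hle
  omega

end

end LevelAlgebra

/-! ### The graded pieces of the quotient -/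

section Pieces

variable {k : Type} [Field k] {r : ℕ} {I : Ideal (MvPolynomial (Fin r) k)}

lemma quotPiece_finite (d : ℕ) : FiniteDimensional k (quotPiece k r I d) := by
  have : FiniteDimensional k (homogeneousSubmodule (Fin r) k d) :=
    Module.Finite.iff_fg.2 (homogeneousSubmodule_fg _ _ d)
  unfold quotPiece
  infer_instance

lemma mem_quotPiece {d : ℕ} {a : MvPolynomial (Fin r) k ⧸ I} :
    a ∈ quotPiece k r I d ↔ ∃ f : MvPolynomial (Fin r) k, f.IsHomogeneous d ∧
      Ideal.Quotient.mk I f = a := by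
  simp only [quotPiece, Submodule.mem_map, mem_homogeneousSubmodule]
  rfl

lemma mul_mem_quotPiece (i j : ℕ) (a b : MvPolynomial (Fin r) k ⧸ I)
    (ha : a ∈ quotPiece k r I i) (hb : b ∈ quotPiece k r I j) :
    a * b ∈ quotPiece k r I (i + j) := by
  rw [mem_quotPiece] at *
  obtain ⟨f, hf, rfl⟩ := ha
  obtain ⟨g, hg, rfl⟩ := hb
  exact ⟨f * g, hf.mul hg, map_mul _ _ _⟩

/-- Since `I` is homogeneous, graded pieces of different degrees intersect in zero. -/
lemma eq_zero_of_mem_quotPiece (hI : ∀ f ∈ I, ∀ d, homogeneousComponent d f ∈ I) {i j : ℕ}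
    (hij : i ≠ j) {a : MvPolynomial (Fin r) k ⧸ I} (hi : a ∈ quotPiece k r I i)
    (hj : a ∈ quotPiece k r I j) : a = 0 := by
  rw [mem_quotPiece] at hi hj
  obtain ⟨f, hf, rfl⟩ := hi
  obtain ⟨g, hg, hfg⟩ := hj
  have h := hI _ (Ideal.Quotient.eq.1 hfg.symm) i
  rw [map_sub, homogeneousComponent_of_mem hf, homogeneousComponent_of_mem hg, if_pos rfl,
    if_neg hij, sub_zero] at h
  exact Ideal.Quotient.eq_zero_iff_mem.2 h

end Pieces

/-- Theorem 3.3 ii): for a level algebra of type 2, codimension `r` with `2 ≤ r ≤ 7`, and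
socle degree `e ≥ 2`, the next-to-last entry of the `h`-vector satisfies `h_{e-1} ≥ r`. -/
theorem stmt4 (k : Type) [Field k] [CharZero k] (r e : ℕ) (hr2 : 2 ≤ r) (hr7 : r ≤ 7)
    (he : 2 ≤ e) (I : Ideal (MvPolynomial (Fin r) k))
    (hI : IsLevelQuot k r e 2 I) (hcodim : hilb k r I 1 = r) :
    r ≤ hilb k r I (e - 1) := by
  obtain ⟨hhom, -, h2, hsocle⟩ := hI
  have := quotPiece_finite (k := k) (I := I) 1
  have := quotPiece_finite (k := k) (I := I) (e - 1)
  have := quotPiece_finite (k := k) (I := I) e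
  have hone : (1 : MvPolynomial (Fin r) k ⧸ I) ∈ quotPiece k r I 0 :=
    mem_quotPiece.2 ⟨1, isHomogeneous_one _ _, map_one _⟩
  have hsoc : ∀ j < e, ∀ a ∈ quotPiece k r I j,
      (∀ x ∈ quotPiece k r I 1, a * x = 0) → a = 0 := by
    intro j hj a ha h
    refine eq_zero_of_mem_quotPiece hhom hj.ne ha ?_
    rw [← SetLike.mem_coe, ← hsocle]
    exact fun i => h _ (mem_quotPiece.2 ⟨X i, isHomogeneous_X _ _, rfl⟩)
  -- The coordinates of `A_e` in a basis, extended linearly to `A`.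
  let b : Module.Basis (Fin 2) k (quotPiece k r I e) := Module.finBasisOfFinrankEq k _ h2
  obtain ⟨l, hl⟩ := LinearMap.exists_extend (b.coord 0)
  obtain ⟨g, hg⟩ := LinearMap.exists_extend (b.coord 1)
  have hsep : ∀ a ∈ quotPiece k r I e, l a = 0 → g a = 0 → a = 0 := by
    intro a ha h0 h1
    have e0 : b.coord 0 ⟨a, ha⟩ = 0 := by rw [← hl]; exact h0
    have e1 : b.coord 1 ⟨a, ha⟩ = 0 := by rw [← hg]; exact h1
    have : (⟨a, ha⟩ : quotPiece k r I e) = 0 := by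
      refine b.forall_coord_eq_zero_iff.1 fun i => ?_
      fin_cases i
      · exact e0
      · exact e1
    exact congrArg Subtype.val this
  by_contra! hlt
  have h8 := eight_le_finrank he hone mul_mem_quotPiece hsoc hsep
    (show hilb k r I (e - 1) < hilb k r I 1 by rwa [hcodim])
  change 8 ≤ hilb k r I 1 at h8
  omega
end

section
/- Let A be a level standard graded artinian algebra of type 2, codimension r and socle degree e ≥ 3 over k, with h-vector (1, r, …, h_{e-2}, h_{e-1}, 2), and suppose h_{e-1} = r. Then h_{e-2} ≤ C(r,2) + 1. -/
/-!
Choose functionals `f`, `g` restricting to a basis of the dual of `A_e`; they play the role of the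
two dual forms (Macaulay inverse system). Since `A` is level, the functionals `a ↦ f (q a)` and
`a ↦ g (q a)` with `q` of degree `j` separate the points of `A_{e-j}`. So `h_{e-1} = r` bounds the
dimension of the space of first derivatives, and `h_{e-2}` is at most the dimension of the space
of second derivatives (`finrank_le_of_separating`).

Let `V` be the space of linear forms, `m` the dimension of the space `V·f` of first derivatives of
`f`, and `n` that of the first derivatives of `g` modulo `V·f`, so `m + n ≤ r` and `m ≥ 1`.
Multiplying the linear relations by linear forms shows that the second derivatives of `f` span at
most `C(m+1, 2)` dimensions, and those of `g` add at most `C(n+1, 2)` (`finrank_map_mul_self_le`).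

* If `n ≥ 1`, then with `s = m + n ≤ r` the bound is
  `C(s+1, 2) - m n ≤ C(s+1, 2) - (s - 1) = C(s, 2) + 1 ≤ C(r, 2) + 1`.
* If `n = 0` and `m < r`, the bound `C(m+1, 2) ≤ C(r, 2)` suffices.
* If `n = 0` and `m = r`, there is an endomorphism `φ` of the space of linear forms with
  `x·g = φ(x)·f`. It is not scalar, as otherwise a combination of `f` and `g` would vanish on
  `A_e`. By commutativity each quadric `y φ(x) - x φ(y)` annihilates `f`, and these quadrics span
  at least `r - 1` dimensions (`finrank_map_add_finrank_le_of_nonscalar`), which leaves at most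
  `C(r+1, 2) - (r - 1) = C(r, 2) + 1` dimensions of second derivatives.
-/

open MvPolynomial

/-! ### Dimension counts -/

theorem finrank_sup_eq_add_finrank_map_mkQ {k M : Type*} [Field k] [AddCommGroup M] [Module k M]
    [FiniteDimensional k M] (U U' : Submodule k M) :
    Module.finrank k ↥(U ⊔ U') =
      Module.finrank k U + Module.finrank k (U'.map U.mkQ) := by
  have h := LinearMap.finrank_range_add_finrank_ker (U.mkQ.domRestrict (U ⊔ U'))
  have h1 : LinearMap.range (U.mkQ.domRestrict (U ⊔ U')) = U'.map U.mkQ := by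
    rw [LinearMap.range_domRestrict, Submodule.map_sup]
    simp
  have h2 : LinearMap.ker (U.mkQ.domRestrict (U ⊔ U')) = U.comap (U ⊔ U').subtype := by
    ext x
    simp
  rw [h1, h2, (Submodule.comapSubtypeEquivOfLe (le_sup_left : U ≤ U ⊔ U')).finrank_eq] at h
  omega

/-- If `T₂` kills `(V ∩ ker T₁) * V`, then modulo `ker T₂` every product of two elements of `V`
is a combination of products of lifts of a basis of `T₁(V)`. With `m = dim T₁(V)` there are only
`C(m+1, 2)` such products, since they are indexed by unordered pairs. -/
theorem finrank_map_mul_self_le {k P M₁ M₂ : Type*} [Field k] [CommRing P] [Algebra k P]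
    [AddCommGroup M₁] [Module k M₁] [AddCommGroup M₂] [Module k M₂]
    (V : Submodule k P) [FiniteDimensional k V] (T₁ : P →ₗ[k] M₁) (T₂ : P →ₗ[k] M₂)
    (h : ∀ x ∈ V, T₁ x = 0 → ∀ y ∈ V, T₂ (x * y) = 0) :
    Module.finrank k ((V * V).map T₂) ≤ (Module.finrank k (V.map T₁) + 1).choose 2 := by
  set m := Module.finrank k (V.map T₁)
  let b : Module.Basis (Fin m) k (V.map T₁) := Module.finBasis k _
  have hb : ∀ i, ∃ c ∈ V, T₁ c = b i := fun i => (b i).2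
  choose c hcV hcb using hb
  let g : Sym2 (Fin m) → M₂ :=
    Sym2.lift ⟨fun i j => T₂ (c i * c j), fun i j => congrArg T₂ (mul_comm _ _)⟩
  -- Each element of `V` is a combination of the `c i` up to an element of `V ∩ ker T₁`.
  have dec : ∀ x ∈ V, ∃ a : Fin m → k, x - ∑ i, a i • c i ∈ V ∧
      T₁ (x - ∑ i, a i • c i) = 0 := by
    intro x hx
    refine ⟨b.repr ⟨T₁ x, x, hx, rfl⟩,
      V.sub_mem hx (V.sum_mem fun i _ => V.smul_mem _ (hcV i)), ?_⟩
    have := congrArg Subtype.val (b.sum_repr ⟨T₁ x, x, hx, rfl⟩)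
    simp only [Submodule.coe_sum, Submodule.coe_smul] at this
    simp only [map_sub, map_sum, map_smul, hcb, this, sub_self]
  have hle : (V * V).map T₂ ≤ Submodule.span k (Set.range g) := by
    rw [Submodule.map_le_iff_le_comap, Submodule.mul_le]
    intro x hx y hy
    obtain ⟨a, ha, ha0⟩ := dec x hx
    obtain ⟨a', ha', ha0'⟩ := dec y hy
    have e1 := h _ ha ha0 y hy
    have e2 : ∀ i, T₂ (c i * y) = ∑ j, a' j • T₂ (c i * c j) := by
      intro i
      have := h _ ha' ha0' (c i) (hcV i)
      rw [mul_comm, mul_sub, map_sub, sub_eq_zero, Finset.mul_sum, map_sum] at this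
      simpa using this
    rw [sub_mul, map_sub, sub_eq_zero, Finset.sum_mul, map_sum] at e1
    simp only [smul_mul_assoc, map_smul, e2] at e1
    rw [Submodule.mem_comap, e1]
    refine Submodule.sum_mem _ fun i _ => Submodule.smul_mem _ _
      (Submodule.sum_mem _ fun j _ => Submodule.smul_mem _ _ (Submodule.subset_span ?_))
    exact ⟨s(i, j), rfl⟩
  have : FiniteDimensional k (Submodule.span k (Set.range g)) :=
    FiniteDimensional.span_of_finite k (Set.finite_range g)
  calc Module.finrank k ((V * V).map T₂) ≤ Module.finrank k (Submodule.span k (Set.range g)) :=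
        Submodule.finrank_mono hle
    _ ≤ Fintype.card (Sym2 (Fin m)) := finrank_range_le_card g
    _ = (m + 1).choose 2 := by rw [Sym2.card, Fintype.card_fin]

/-- With `s = m + n` the left side is `C(s+1, 2) - m n`, and `m n ≥ s - 1`. -/
theorem choose_add_choose_le {r m n : ℕ} (hm : 1 ≤ m) (hn : 1 ≤ n) (h : m + n ≤ r) :
    (m + 1).choose 2 + (n + 1).choose 2 ≤ r.choose 2 + 1 := by
  obtain ⟨m, rfl⟩ := Nat.exists_eq_add_of_le' hm
  obtain ⟨n, rfl⟩ := Nat.exists_eq_add_of_le' hn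
  have h0 : (m + n + 2).choose 2 ≤ r.choose 2 := Nat.choose_le_choose 2 (by omega)
  refine le_trans ?_ (Nat.add_le_add_right h0 1)
  have e : ∀ a : ℕ, ((a + 1).choose 2 : ℤ) * 2 = (a + 1) * a := by
    intro a
    have h2 : (a + 1).choose 2 * 2 = (a + 1) * a := by
      rw [Nat.choose_two_right, Nat.add_sub_cancel]
      exact Nat.div_mul_cancel (by rw [mul_comm]; exact (Nat.even_mul_succ_self a).two_dvd)
    exact_mod_cast h2
  have e1 := e (m + 1)
  have e2 := e (n + 1)
  have e3 := e (m + n + 1)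
  zify
  push_cast at *
  nlinarith [mul_nonneg (Int.natCast_nonneg m) (Int.natCast_nonneg n)]

/-! ### Linear forms -/

theorem prime_of_linear {k : Type*} [Field k] {σ : Type*} {p : MvPolynomial σ k}
    (hp : p.IsHomogeneous 1) (h0 : p ≠ 0) : Prime p := by
  refine (irreducible_of_totalDegree_eq_one (hp.totalDegree h0) ?_).prime
  intro x hx
  rw [isUnit_iff_ne_zero]
  rintro rfl
  exact h0 (MvPolynomial.ext _ _ fun i => by simpa using hx i)

theorem exists_smul_of_linear_dvd {k : Type*} [Field k] {σ : Type*} {p q : MvPolynomial σ k}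
    (hp : p.IsHomogeneous 1) (h0 : p ≠ 0) (hq : q.IsHomogeneous 1) (h : p ∣ q) :
    ∃ c : k, q = c • p := by
  obtain ⟨s, rfl⟩ := h
  by_cases hs : s = 0
  · exact ⟨0, by simp [hs]⟩
  have h1 := hq.totalDegree (mul_ne_zero h0 hs)
  rw [totalDegree_mul_of_isDomain h0 hs, hp.totalDegree h0] at h1
  rw [totalDegree_eq_zero_iff_eq_C.mp (show s.totalDegree = 0 by omega)]
  exact ⟨_, by rw [mul_comm, smul_eq_C_mul]⟩

/-- For a non-scalar endomorphism `φ` of a space `V` of linear forms, the quadrics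
`y φ(x) - x φ(y)` span a space of dimension at least `dim V - 1`: for a fixed `x` that is not an
eigenvector, `x φ(y) = y φ(x)` forces `x ∣ y` because `x` is prime and does not divide `φ(x)`. -/
theorem finrank_map_add_finrank_le_of_nonscalar {k : Type*} [Field k] {σ M : Type*}
    [AddCommGroup M] [Module k M] (V : Submodule k (MvPolynomial σ k)) [FiniteDimensional k V]
    (hV : ∀ x ∈ V, x.IsHomogeneous 1)
    (φ : V →ₗ[k] V) (hφ : ∀ c : k, φ ≠ c • 1) (T : MvPolynomial σ k →ₗ[k] M)
    (hT : ∀ x y : V, T ((y : MvPolynomial σ k) * φ x - x * φ y) = 0) :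
    Module.finrank k ((V * V).map T) + Module.finrank k V ≤ Module.finrank k ↥(V * V) + 1 := by
  have fVV : FiniteDimensional k ↥(V * V) :=
    Module.Finite.of_fg ((Module.Finite.iff_fg.mp ‹_›).mul (Module.Finite.iff_fg.mp ‹_›))
  obtain ⟨x, hx⟩ : ∃ x, LinearIndependent k ![x, φ x] := by
    by_contra! hcon
    obtain ⟨c, hc⟩ := LinearMap.exists_eq_smul_id_of_forall_notLinearIndependent hcon
    exact hφ c hc
  have hx0 : x ≠ 0 := hx.ne_zero 0
  have hx0' : (x : MvPolynomial σ k) ≠ 0 := by simpa using hx0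
  let L : V →ₗ[k] ↥(V * V) :=
    { toFun := fun y => ⟨(y : MvPolynomial σ k) * φ x - x * φ y,
        Submodule.sub_mem _ (Submodule.mul_mem_mul y.2 (φ x).2)
          (Submodule.mul_mem_mul x.2 (φ y).2)⟩
      map_add' := fun y z => by
        ext1
        simp only [map_add, Submodule.coe_add]
        ring
      map_smul' := fun c y => by
        ext1
        simp [smul_sub] }
  have hker : LinearMap.ker L ≤ Submodule.span k {x} := by
    intro y hy
    have hy' : (y : MvPolynomial σ k) * φ x - x * φ y = 0 := congrArg Subtype.val hy
    have hdvd : (x : MvPolynomial σ k) ∣ y * φ x := ⟨φ y, sub_eq_zero.mp hy'⟩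
    rcases (prime_of_linear (hV x x.2) hx0').dvd_or_dvd hdvd with h | h
    · obtain ⟨c, hc⟩ := exists_smul_of_linear_dvd (hV x x.2) hx0' (hV y y.2) h
      exact Submodule.mem_span_singleton.mpr ⟨c, Subtype.ext hc.symm⟩
    · obtain ⟨c, hc⟩ := exists_smul_of_linear_dvd (hV x x.2) hx0' (hV _ (φ x).2) h
      have h2 := LinearIndependent.pair_iff.mp hx c (-1)
        (by rw [show φ x = c • x from Subtype.ext hc]; simp)
      simp at h2
  have h1 : Module.finrank k (LinearMap.ker L) ≤ 1 :=
    (Submodule.finrank_mono hker).trans ((finrank_span_le_card _).trans (by simp))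
  have h2 := LinearMap.finrank_range_add_finrank_ker L
  have h3 := LinearMap.finrank_range_add_finrank_ker (T.domRestrict (V * V))
  rw [LinearMap.range_domRestrict] at h3
  have h4 : LinearMap.range L ≤ LinearMap.ker (T.domRestrict (V * V)) := by
    rintro _ ⟨y, rfl⟩
    exact hT x y
  have h5 := Submodule.finrank_mono h4
  omega

/-! ### Second derivatives of a pencil of forms -/

/-- The bound in abstract form. Here `F₁ x`, `G₁ x` stand for the first derivatives of two forms,
and `F₂ q`, `G₂ q` for the second ones; `hF` and `hG` say that the gradients of the two forms are
linearly independent. Every relation `F₁ z = G₁ x` between first derivatives can be multiplied by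
linear forms (`hmul`). If the first derivatives span at most `r` dimensions, then the second
derivatives span at most `C(r, 2) + 1` dimensions. -/
theorem finrank_map_mul_self_sup_le {k : Type*} [Field k] {r : ℕ} {M₁ M₂ : Type*}
    [AddCommGroup M₁] [Module k M₁] [FiniteDimensional k M₁]
    [AddCommGroup M₂] [Module k M₂] [FiniteDimensional k M₂]
    (F₁ G₁ : MvPolynomial (Fin r) k →ₗ[k] M₁) (F₂ G₂ : MvPolynomial (Fin r) k →ₗ[k] M₂)
    (hrank : Module.finrank k ↥((homogeneousSubmodule (Fin r) k 1).map F₁ ⊔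
      (homogeneousSubmodule (Fin r) k 1).map G₁) ≤ r)
    (hmul : ∀ x ∈ homogeneousSubmodule (Fin r) k 1, ∀ z ∈ homogeneousSubmodule (Fin r) k 1,
      F₁ z = G₁ x → ∀ y ∈ homogeneousSubmodule (Fin r) k 1, F₂ (z * y) = G₂ (x * y))
    (hF : ∃ x ∈ homogeneousSubmodule (Fin r) k 1, F₁ x ≠ 0)
    (hG : ∀ c : k, ∃ x ∈ homogeneousSubmodule (Fin r) k 1, G₁ x ≠ c • F₁ x) :
    Module.finrank k
      ↥((homogeneousSubmodule (Fin r) k 1 * homogeneousSubmodule (Fin r) k 1).map F₂ ⊔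
        (homogeneousSubmodule (Fin r) k 1 * homogeneousSubmodule (Fin r) k 1).map G₂) ≤
      r.choose 2 + 1 := by
  have hVr : Module.finrank k (homogeneousSubmodule (Fin r) k 1) ≤ r := by
    rw [homogeneousSubmodule_one_eq_span_X]
    exact (finrank_range_le_card _).trans (by simp)
  have fV : FiniteDimensional k (homogeneousSubmodule (Fin r) k 1) :=
    Module.Finite.of_fg (homogeneousSubmodule_fg _ k 1)
  set V := homogeneousSubmodule (Fin r) k 1 with hV
  rw [finrank_sup_eq_add_finrank_map_mkQ] at hrank ⊢
  -- The second derivatives of the first form are controlled by its first derivatives.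
  have b1 := finrank_map_mul_self_le V F₁ F₂ (fun x hx h y hy => by
    have := hmul 0 V.zero_mem x hx (by simpa using h) y hy
    simpa using this)
  -- The same holds for the second form, working modulo the derivatives of the first.
  have b2 := finrank_map_mul_self_le V ((V.map F₁).mkQ ∘ₗ G₁) (((V * V).map F₂).mkQ ∘ₗ G₂)
    (fun x hx h y hy => by
      simp only [LinearMap.comp_apply, Submodule.mkQ_apply, Submodule.Quotient.mk_eq_zero] at h ⊢
      obtain ⟨z, hz, hzx⟩ := h
      exact ⟨z * y, Submodule.mul_mem_mul hz hy, hmul x hx z hz hzx y hy⟩)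
  rw [Submodule.map_comp, Submodule.map_comp] at b2
  have hm : 1 ≤ Module.finrank k (V.map F₁) := by
    obtain ⟨x, hx, h0⟩ := hF
    exact Submodule.one_le_finrank_iff.mpr fun h =>
      h0 ((Submodule.mem_bot k).mp (h ▸ Submodule.mem_map_of_mem hx))
  set m := Module.finrank k (V.map F₁) with hmdef
  rcases Nat.eq_zero_or_pos (Module.finrank k ((V.map G₁).map (V.map F₁).mkQ)) with hn | hn
  · rw [hn] at b2 hrank
    have hc1 : (0 + 1).choose 2 = 0 := rfl
    rw [hc1] at b2
    -- Here the derivatives of the second form are among those of the first, so only the second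
    -- derivatives of the first form count.
    rcases hrank.lt_or_eq with hlt | heq
    · have : (m + 1).choose 2 ≤ r.choose 2 := Nat.choose_le_choose 2 (by omega)
      omega
    · have hGF : V.map G₁ ≤ V.map F₁ := by
        have := Submodule.finrank_eq_zero.mp hn
        rwa [eq_bot_iff, Submodule.map_le_iff_le_comap, Submodule.comap_bot,
          Submodule.ker_mkQ] at this
      have hk := LinearMap.finrank_range_add_finrank_ker (F₁.domRestrict V)
      rw [LinearMap.range_domRestrict] at hk
      have hinj : Function.Injective (F₁.domRestrict V) := by
        rw [← LinearMap.ker_eq_bot, ← Submodule.finrank_eq_zero (R := k)]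
        omega
      have hr : LinearMap.range (F₁.domRestrict V) = V.map F₁ := LinearMap.range_domRestrict ..
      -- The first form has no linear annihilator, so `F₁ (φ x) = G₁ x` defines an endomorphism `φ`.
      -- It is not scalar, and `y φ(x) - x φ(y)` annihilates the first form.
      let G' : V →ₗ[k] LinearMap.range (F₁.domRestrict V) :=
        (G₁.domRestrict V).codRestrict _ fun x => by
          rw [hr]
          exact hGF (Submodule.mem_map_of_mem x.2)
      let φ : V →ₗ[k] V := (LinearEquiv.ofInjective _ hinj).symm.toLinearMap ∘ₗ G'
      have hφ : ∀ x : V, F₁ (φ x) = G₁ x := fun x =>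
        congrArg Subtype.val ((LinearEquiv.ofInjective _ hinj).apply_symm_apply (G' x))
      have := finrank_map_add_finrank_le_of_nonscalar V (fun _ h => h) φ (fun c hc => by
        obtain ⟨x, hx, hne⟩ := hG c
        apply hne
        have := hφ ⟨x, hx⟩
        rw [hc] at this
        simpa using this.symm) F₂ (fun x y => by
          rw [map_sub, sub_eq_zero, mul_comm, hmul x x.2 (φ x) (φ x).2 (hφ x) y y.2,
            mul_comm (x : MvPolynomial (Fin r) k) (φ y),
            hmul y y.2 (φ y) (φ y).2 (hφ y) x x.2, mul_comm])
      have b3 := finrank_map_mul_self_le V LinearMap.id (LinearMap.id (M := MvPolynomial (Fin r) k))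
        (fun x _ h y _ => by simp_all)
      rw [Submodule.map_id, Submodule.map_id] at b3
      have h6 := Nat.choose_le_choose 2 (Nat.add_le_add_right hVr 1)
      have h7 : (r + 1).choose 2 = r + r.choose 2 := by
        rw [Nat.choose_succ_succ' r 1, Nat.choose_one_right]
      omega
  · have := choose_add_choose_le hm hn hrank
    omega

/-! ### Functionals on the graded pieces of a level algebra -/

section LevelQuotient

variable {k : Type} [Field k] {r : ℕ} {I : Ideal (MvPolynomial (Fin r) k)}

instance finite_quotPiece (d : ℕ) : FiniteDimensional k (quotPiece k r I d) := by
  have : FiniteDimensional k (homogeneousSubmodule (Fin r) k d) :=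
    Module.Finite.of_fg (homogeneousSubmodule_fg _ k d)
  unfold quotPiece
  infer_instance

theorem mk_mul_mem_quotPiece {d : ℕ} {x : MvPolynomial (Fin r) k}
    (hx : x ∈ homogeneousSubmodule (Fin r) k 1) {a : MvPolynomial (Fin r) k ⧸ I}
    (ha : a ∈ quotPiece k r I d) : Ideal.Quotient.mk I x * a ∈ quotPiece k r I (d + 1) := by
  obtain ⟨p, hp, rfl⟩ := ha
  refine ⟨x * p, ?_, map_mul (Ideal.Quotient.mk I) x p⟩
  rw [add_comm]
  exact IsHomogeneous.mul hx hp

/-- In a level algebra, an element of degree less than the socle degree annihilated by all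
variables is zero. -/
theorem eq_zero_of_mk_X_mul_eq_zero {e t : ℕ} (hI : IsLevelQuot k r e t I) {d : ℕ} (hd : d < e)
    {a : MvPolynomial (Fin r) k ⧸ I} (ha : a ∈ quotPiece k r I d)
    (h : ∀ i, Ideal.Quotient.mk I (X i) * a = 0) : a = 0 := by
  obtain ⟨hhom, -, -, hsoc⟩ := hI
  have hs : a ∈ (quotPiece k r I e : Set (MvPolynomial (Fin r) k ⧸ I)) := by
    rw [← hsoc]
    intro i
    rw [mul_comm, h i]
  obtain ⟨q, hq, hqa⟩ := hs
  obtain ⟨p, hp, rfl⟩ := ha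
  have hsub : p - q ∈ I := Ideal.Quotient.eq.mp hqa.symm
  have hc := hhom _ hsub d
  rw [map_sub, homogeneousComponent_of_mem hp, homogeneousComponent_of_mem hq, if_pos rfl,
    if_neg hd.ne, sub_zero] at hc
  exact Ideal.Quotient.eq_zero_iff_mem.mpr hc

/-- A functional vanishing on `A_1 · A_d` vanishes on `A_{d+1}`, as `A` is generated in degree one. -/
theorem eq_zero_on_quotPiece_succ {d : ℕ} (f : MvPolynomial (Fin r) k ⧸ I →ₗ[k] k)
    (h : ∀ x ∈ homogeneousSubmodule (Fin r) k 1, ∀ a ∈ quotPiece k r I d,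
      f (Ideal.Quotient.mk I x * a) = 0) :
    ∀ a ∈ quotPiece k r I (d + 1), f a = 0 := by
  rintro _ ⟨p, hp, rfl⟩
  rw [SetLike.mem_coe, ← homogeneousSubmodule_one_pow, pow_succ',
    homogeneousSubmodule_one_pow] at hp
  have hle : homogeneousSubmodule (Fin r) k 1 * homogeneousSubmodule (Fin r) k d ≤
      LinearMap.ker (f ∘ₗ (Ideal.Quotient.mkₐ k I).toLinearMap) := by
    rw [Submodule.mul_le]
    intro x hx y hy
    have := h x hx _ (Submodule.mem_map_of_mem hy)
    simpa using this
  exact hle hp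

/-- Two functionals on the ambient space that restrict to a basis of the dual of a plane `U`. -/
theorem exists_dual_pair {A : Type*} [AddCommGroup A] [Module k A] (U : Submodule k A)
    (hU : Module.finrank k U = 2) :
    ∃ f g : A →ₗ[k] k, (∀ a ∈ U, f a = 0 → g a = 0 → a = 0) ∧ (∃ a ∈ U, f a ≠ 0) ∧
      ∀ c : k, ∃ a ∈ U, (g - c • f) a ≠ 0 := by
  have : FiniteDimensional k U := Module.finite_of_finrank_pos (by omega)
  let b : Module.Basis (Fin 2) k U := Module.finBasisOfFinrankEq k U hU
  obtain ⟨f, hf⟩ := (b.coord 0).exists_extend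
  obtain ⟨g, hg⟩ := (b.coord 1).exists_extend
  have hf' : ∀ u : U, f u = b.repr u 0 := fun u => LinearMap.congr_fun hf u
  have hg' : ∀ u : U, g u = b.repr u 1 := fun u => LinearMap.congr_fun hg u
  refine ⟨f, g, fun a ha h0 h1 => ?_, ⟨b 0, (b 0).2, ?_⟩, fun c => ⟨b 1, (b 1).2, ?_⟩⟩
  · have : (⟨a, ha⟩ : U) = 0 := b.ext_elem fun i => by
      fin_cases i
      · simpa using (hf' ⟨a, ha⟩).symm.trans h0
      · simpa using (hg' ⟨a, ha⟩).symm.trans h1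
    exact congrArg Subtype.val this
  · simp [hf']
  · simp [hf', hg']

/-- A space of functionals separating the points of `M` has dimension at least `dim M`. -/
theorem finrank_le_of_separating {M : Type*} [AddCommGroup M] [Module k M] [FiniteDimensional k M]
    (W : Submodule k (Module.Dual k M)) (h : ∀ a : M, (∀ w ∈ W, w a = 0) → a = 0) :
    Module.finrank k M ≤ Module.finrank k W := by
  rw [← Subspace.dual_finrank_eq (V := W)]
  refine LinearMap.finrank_le_finrank_of_injective
    (f := W.subtype.dualMap ∘ₗ Module.Dual.eval k M) ?_
  rw [← LinearMap.ker_eq_bot, eq_bot_iff]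
  intro a ha
  exact h a fun w hw => LinearMap.congr_fun (LinearMap.mem_ker.mp ha) ⟨w, hw⟩

/-- The contraction `q ∘ f` of a functional `f` by a polynomial `q`, restricted to the degree-`d`
piece of `A = k[x_1,…,x_r]/I`: it sends `a ∈ A_d` to `f (q a)`. For `f` a functional on `A_e` and
`q` of degree `e - d`, this is the derivative of the dual form of `f` by `q`. Both `f` and `q` are
left unrestricted, so that the map is linear on the whole polynomial ring. -/
noncomputable def contraction (f : MvPolynomial (Fin r) k ⧸ I →ₗ[k] k) (d : ℕ) :
    MvPolynomial (Fin r) k →ₗ[k] Module.Dual k (quotPiece k r I d) :=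
  LinearMap.mk₂ k (fun q a => f (Ideal.Quotient.mkₐ k I q * (a : MvPolynomial (Fin r) k ⧸ I)))
    (fun p q a => by rw [map_add, add_mul, map_add])
    (fun c p a => by rw [map_smul, smul_mul_assoc, map_smul])
    (fun p a b => by rw [Submodule.coe_add, mul_add, map_add])
    (fun c p a => by rw [Submodule.coe_smul, mul_smul_comm, map_smul])

theorem contraction_apply (f : MvPolynomial (Fin r) k ⧸ I →ₗ[k] k) (d : ℕ)
    (q : MvPolynomial (Fin r) k) (a : quotPiece k r I d) :
    contraction f d q a = f (Ideal.Quotient.mk I q * a) := rfl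

end LevelQuotient

/-- Theorem 3.5 i), upper bound: for a level algebra of type 2, codimension `r` and socle
degree `e ≥ 3` whose `h`-vector satisfies `h_{e-1} = r`, one has `h_{e-2} ≤ C(r,2) + 1`. -/
theorem stmt6 (k : Type) [Field k] [CharZero k] (r e : ℕ) (hr : 1 ≤ r) (he : 3 ≤ e)
    (I : Ideal (MvPolynomial (Fin r) k))
    (hI : IsLevelQuot k r e 2 I) (hcodim : hilb k r I 1 = r)
    (hpen : hilb k r I (e - 1) = r) :
    hilb k r I (e - 2) ≤ r.choose 2 + 1 := by
  obtain ⟨s, rfl⟩ : ∃ s, e = s + 1 + 1 := ⟨e - 2, by omega⟩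
  rw [show s + 1 + 1 - 1 = s + 1 by omega] at hpen
  rw [show s + 1 + 1 - 2 = s by omega]
  obtain ⟨f, g, hsep, hf, hg⟩ := exists_dual_pair (quotPiece k r I (s + 1 + 1)) hI.2.2.1
  have hX : ∀ i : Fin r, X i ∈ homogeneousSubmodule (Fin r) k 1 := fun i => isHomogeneous_X k i
  refine le_trans (finrank_le_of_separating
    ((homogeneousSubmodule (Fin r) k 1 * homogeneousSubmodule (Fin r) k 1).map
        (contraction f s) ⊔
      (homogeneousSubmodule (Fin r) k 1 * homogeneousSubmodule (Fin r) k 1).map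
        (contraction g s)) ?_)
    (finrank_map_mul_self_sup_le (contraction f (s + 1)) (contraction g (s + 1))
      (contraction f s) (contraction g s)
      ?_ ?_ ?_ ?_)
  · intro a ha
    have key : ∀ i j, Ideal.Quotient.mk I (X i) * (Ideal.Quotient.mk I (X j) * (a : _ ⧸ I)) = 0 := by
      intro i j
      have hmem := Submodule.mul_mem_mul (hX i) (hX j)
      refine hsep _ (mk_mul_mem_quotPiece (hX i) (mk_mul_mem_quotPiece (hX j) a.2)) ?_ ?_
      · have := ha _ (Submodule.mem_sup_left (Submodule.mem_map_of_mem hmem))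
        rwa [contraction_apply, map_mul (Ideal.Quotient.mk I), mul_assoc] at this
      · have := ha _ (Submodule.mem_sup_right (Submodule.mem_map_of_mem hmem))
        rwa [contraction_apply, map_mul (Ideal.Quotient.mk I), mul_assoc] at this
    refine Subtype.ext (eq_zero_of_mk_X_mul_eq_zero hI (by omega) a.2 fun j => ?_)
    exact eq_zero_of_mk_X_mul_eq_zero hI (by omega) (mk_mul_mem_quotPiece (hX j) a.2)
      fun i => key i j
  · refine (Submodule.finrank_le _).trans ?_
    rw [Subspace.dual_finrank_eq]
    exact hpen.le
  · intro x hx z hz h y hy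
    ext a
    have := LinearMap.congr_fun h ⟨_, mk_mul_mem_quotPiece hy a.2⟩
    simpa only [contraction_apply, map_mul, mul_assoc] using this
  · by_contra! hcon
    obtain ⟨a, ha, hne⟩ := hf
    exact hne (eq_zero_on_quotPiece_succ f
      (fun x hx b hb => LinearMap.congr_fun (hcon x hx) ⟨b, hb⟩) a ha)
  · intro c
    by_contra! hcon
    obtain ⟨a, ha, hne⟩ := hg c
    refine hne (eq_zero_on_quotPiece_succ (g - c • f) (fun x hx b hb => ?_) a ha)
    have := LinearMap.congr_fun (hcon x hx) ⟨b, hb⟩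
    rw [LinearMap.sub_apply, sub_eq_zero]
    exact this
end

section
/- For all integers r ≥ 2, e ≥ 4 and b with r ≤ b ≤ C(r,2) + 1, there exists a level standard graded artinian algebra of type 2, codimension r and socle degree e over k whose h-vector (1, r, …, h_{e-2}, h_{e-1}, 2) satisfies h_{e-2} = b and h_{e-1} = r. -/
/-!
The construction is a Macaulay inverse system in disguise, phrased with point evaluations instead
of derivatives. Fix a variable `z` and a family `P` of nonempty subsets of the variables with at
most two elements, containing all singletons, whose only member containing `z` is `{z}`. To
`T ∈ P` corresponds the point `p_T`, the indicator vector of `T`. Let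
`L f = (∑_{T ∈ P, T ≠ {z}} f(p_T), f(p_{z}))`, and let `I` be the largest ideal on which
the composite of `L` with the projection to degree `e` vanishes; this is the annihilator of the
two forms `∑_{T ≠ {z}} ℓ_T^e` and `x_z^e`, where `ℓ_T = ∑_{i ∈ T} x_i`.

* Any ideal of this kind is homogeneous and its quotient has socle equal to its degree-`e` piece
  (`isLevelQuot_annIdeal`).
* For `m ≥ 2` the degree-`m` forms take arbitrary values on the points `p_T`, `T ∈ P`
  (`exists_form_eval`), because `∏_{i ∈ T} x_i` times a power of a variable of `T` evaluates at
  `p_{T'}` to the indicator of `T ⊆ T'`.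
* Hence a form of degree `d` with `2 ≤ d ≤ e - 2` lies in `I` iff it vanishes at all the points,
  a form of degree `e - 1` lies in `I` iff `∑_T f(p_T) p_T = 0`, and a form of degree `e` iff
  `L f = 0`. This gives `h_{e-2} = |P|`, `h_{e-1} = r` and `h_e = 2`.

Taking `b - r` pairs among the `C(r-1,2)` pairs avoiding `z` makes `|P| = b`.
-/

open MvPolynomial

/-! ### Annihilator ideals of functionals on degree-`e` forms -/

section AnnIdeal

variable {k : Type} [Field k] {r : ℕ} {V : Type} [AddCommGroup V] [Module k V]

/-- The largest ideal on which `L`, composed with the projection to degree `e`, vanishes. -/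
noncomputable def annIdeal (L : MvPolynomial (Fin r) k →ₗ[k] V) (e : ℕ) :
    Ideal (MvPolynomial (Fin r) k) where
  carrier := {f | ∀ g, L (homogeneousComponent e (f * g)) = 0}
  add_mem' := by
    intro a b ha hb g
    rw [add_mul, map_add, map_add, ha g, hb g, add_zero]
  zero_mem' := by intro g; simp
  smul_mem' := by
    intro c x hx g
    rw [smul_eq_mul, mul_comm c x, mul_assoc]
    exact hx _

theorem mem_annIdeal {L : MvPolynomial (Fin r) k →ₗ[k] V} {e : ℕ} {f : MvPolynomial (Fin r) k} :
    f ∈ annIdeal L e ↔ ∀ g, L (homogeneousComponent e (f * g)) = 0 := Iff.rfl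

theorem homogeneousComponent_mul_left {d : ℕ} {f : MvPolynomial (Fin r) k}
    (hf : f.IsHomogeneous d) (e : ℕ) (g : MvPolynomial (Fin r) k) :
    homogeneousComponent e (f * g) =
      if d ≤ e then f * homogeneousComponent (e - d) g else 0 := by
  let := MvPolynomial.gradedAlgebra (σ := Fin r) (R := k)
  have h := DirectSum.coe_decompose_mul_of_left_mem (homogeneousSubmodule (Fin r) k)
    (a := f) (b := g) e (i := d) hf
  have key : ∀ (p : MvPolynomial (Fin r) k) (n : ℕ),
      ((DirectSum.decompose (homogeneousSubmodule (Fin r) k) p n : _) : MvPolynomial (Fin r) k) =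
        homogeneousComponent n p := fun p n => decomposition.decompose'_apply p n
  simpa only [key] using h

theorem mem_annIdeal_of_isHomogeneous {L : MvPolynomial (Fin r) k →ₗ[k] V} {e d : ℕ}
    (hd : d ≤ e) {f : MvPolynomial (Fin r) k} (hf : f.IsHomogeneous d) :
    f ∈ annIdeal L e ↔
      ∀ g : MvPolynomial (Fin r) k, g.IsHomogeneous (e - d) → L (f * g) = 0 := by
  rw [mem_annIdeal]
  constructor
  · intro h g hg
    have h1 := h g
    rwa [homogeneousComponent_mul_left hf, if_pos hd, homogeneousComponent_eq_self hg] at h1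
  · intro h g
    rw [homogeneousComponent_mul_left hf, if_pos hd]
    exact h _ (homogeneousComponent_isHomogeneous _ _)

theorem mem_annIdeal_of_lt {L : MvPolynomial (Fin r) k →ₗ[k] V} {e d : ℕ}
    (hd : e < d) {f : MvPolynomial (Fin r) k} (hf : f.IsHomogeneous d) :
    f ∈ annIdeal L e := by
  intro g
  rw [homogeneousComponent_mul_left hf, if_neg (by omega), map_zero]

theorem homogeneousComponent_mem_annIdeal {L : MvPolynomial (Fin r) k →ₗ[k] V} {e : ℕ}
    {f : MvPolynomial (Fin r) k} (hf : f ∈ annIdeal L e) (d : ℕ) :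
    homogeneousComponent d f ∈ annIdeal L e := by
  have hh := homogeneousComponent_isHomogeneous d f
  rcases le_or_gt d e with hd | hd
  · rw [mem_annIdeal_of_isHomogeneous hd hh]
    intro g hg
    have h := hf g
    rw [mul_comm, homogeneousComponent_mul_left hg, if_pos (by omega),
      show e - (e - d) = d by omega, mul_comm] at h
    exact h
  · exact mem_annIdeal_of_lt hd hh

theorem mem_of_homogeneousComponent_mem {I : Ideal (MvPolynomial (Fin r) k)}
    {f : MvPolynomial (Fin r) k} (h : ∀ d, homogeneousComponent d f ∈ I) : f ∈ I := by
  rw [← sum_homogeneousComponent f]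
  exact I.sum_mem fun d _ => h d

/-- A form of degree `d ≠ e` that is a socle element modulo the annihilator ideal already lies in
that ideal: multiples by constants live in the wrong degree, all other multiples involve some
`f * X i`. -/
theorem mem_annIdeal_of_socle {L : MvPolynomial (Fin r) k →ₗ[k] V} {e d : ℕ} (hd : d ≠ e)
    {f : MvPolynomial (Fin r) k} (hf : f.IsHomogeneous d)
    (h : ∀ i, f * X i ∈ annIdeal L e) : f ∈ annIdeal L e := by
  intro g
  induction g using MvPolynomial.induction_on with
  | C c =>
    rw [mul_comm, homogeneousComponent_C_mul, homogeneousComponent_of_mem hf, if_neg (Ne.symm hd)]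
    simp
  | add p q hp hq => rw [mul_add, map_add, map_add, hp, hq, add_zero]
  | mul_X p i _ =>
    rw [mul_comm p, ← mul_assoc]
    exact h i p

/-- The Hilbert function in degree `d` is the rank of any linear map which is onto on forms of
degree `d` and whose kernel there is the degree-`d` part of the ideal. -/
theorem hilb_eq_finrank {I : Ideal (MvPolynomial (Fin r) k)} {d : ℕ} {W : Type} [AddCommGroup W]
    [Module k W] (T : MvPolynomial (Fin r) k →ₗ[k] W)
    (hker : ∀ f : MvPolynomial (Fin r) k, f.IsHomogeneous d → (f ∈ I ↔ T f = 0))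
    (hsurj : ∀ w, ∃ f : MvPolynomial (Fin r) k, f.IsHomogeneous d ∧ T f = w) :
    hilb k r I d = Module.finrank k W := by
  let M := homogeneousSubmodule (Fin r) k d
  let A : M →ₗ[k] MvPolynomial (Fin r) k ⧸ I := (Ideal.Quotient.mkₐ k I).toLinearMap.comp M.subtype
  let B : M →ₗ[k] W := T.comp M.subtype
  have hA : LinearMap.range A = quotPiece k r I d := by
    rw [LinearMap.range_comp, Submodule.range_subtype]
    rfl
  have hB : LinearMap.range B = ⊤ := by
    rw [LinearMap.range_eq_top]
    intro w
    obtain ⟨f, hf, hw⟩ := hsurj w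
    exact ⟨⟨f, hf⟩, hw⟩
  have hk : LinearMap.ker A = LinearMap.ker B := by
    ext ⟨f, hf⟩
    rw [LinearMap.mem_ker, LinearMap.mem_ker]
    change Ideal.Quotient.mk I f = 0 ↔ T f = 0
    rw [Ideal.Quotient.eq_zero_iff_mem]
    exact hker f hf
  have e1 := A.quotKerEquivRange.finrank_eq
  have e2 := B.quotKerEquivRange.finrank_eq
  rw [hA] at e1
  rw [hB, finrank_top] at e2
  unfold hilb
  rw [← e1, ← e2, hk]

theorem isLevelQuot_annIdeal {L : MvPolynomial (Fin r) k →ₗ[k] V} {e t : ℕ}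
    (ht : hilb k r (annIdeal L e) e = t) : IsLevelQuot k r e t (annIdeal L e) := by
  refine ⟨fun f hf d => homogeneousComponent_mem_annIdeal hf d, ?_, ht, ?_⟩
  · intro d hd
    rw [hilb_eq_finrank (W := PUnit) 0 (fun f hf => by simpa using mem_annIdeal_of_lt hd hf)
      (fun w => ⟨0, isHomogeneous_zero _ _ _, rfl⟩)]
    exact Module.finrank_zero_of_subsingleton
  · ext a
    obtain ⟨f, rfl⟩ := Ideal.Quotient.mk_surjective a
    simp only [Set.mem_ofPred_eq, SetLike.mem_coe, ← map_mul, Ideal.Quotient.eq_zero_iff_mem]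
    constructor
    · intro h
      refine ⟨homogeneousComponent e f, homogeneousComponent_isHomogeneous _ _, ?_⟩
      change Ideal.Quotient.mk _ _ = Ideal.Quotient.mk _ _
      rw [eq_comm, Ideal.Quotient.eq]
      apply mem_of_homogeneousComponent_mem
      intro d
      rw [map_sub]
      by_cases hd : d = e
      · subst hd
        rw [homogeneousComponent_eq_self (homogeneousComponent_isHomogeneous _ _), sub_self]
        exact Ideal.zero_mem _
      · rw [homogeneousComponent_of_mem (homogeneousComponent_isHomogeneous e f), if_neg hd,
          sub_zero]
        apply mem_annIdeal_of_socle hd (homogeneousComponent_isHomogeneous _ _)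
        intro i
        have h1 := homogeneousComponent_mem_annIdeal (h i) (1 + d)
        rwa [mul_comm f, homogeneousComponent_mul_left (isHomogeneous_X k i),
          if_pos (by omega), Nat.add_sub_cancel_left, mul_comm] at h1
    · rintro ⟨g, hg, hgf⟩ i
      change Ideal.Quotient.mk _ _ = Ideal.Quotient.mk _ _ at hgf
      rw [← Ideal.Quotient.eq_zero_iff_mem, map_mul, ← hgf, ← map_mul,
        Ideal.Quotient.eq_zero_iff_mem]
      have hg' : g.IsHomogeneous e := hg
      exact mem_annIdeal_of_lt (Nat.lt_succ_self e) (hg'.mul (isHomogeneous_X k i))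

end AnnIdeal

/-! ### Evaluation at indicator points -/

section Points

variable {k : Type} [Field k] {r : ℕ}

/-- Evaluation at the indicator vector of `T`, as a linear functional. -/
noncomputable def evalAt (k : Type) [Field k] {r : ℕ} (T : Finset (Fin r)) :
    MvPolynomial (Fin r) k →ₗ[k] k :=
  (aeval (fun i => if i ∈ T then (1 : k) else 0)).toLinearMap

theorem evalAt_mul (T : Finset (Fin r)) (f g : MvPolynomial (Fin r) k) :
    evalAt k T (f * g) = evalAt k T f * evalAt k T g := by
  simp [evalAt]

theorem evalAt_X (T : Finset (Fin r)) (i : Fin r) :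
    evalAt k T (X i) = if i ∈ T then 1 else 0 := by
  simp [evalAt]

/-- A monomial of degree `m` with support `T` evaluates to the indicator of `T ⊆ T'`. -/
theorem exists_monomial_eval {m : ℕ} {T : Finset (Fin r)} (hT : T.Nonempty) (hm : T.card ≤ m) :
    ∃ f : MvPolynomial (Fin r) k, f.IsHomogeneous m ∧
      ∀ T', evalAt k T' f = if T ⊆ T' then 1 else 0 := by
  obtain ⟨i, hi⟩ := hT
  refine ⟨X i ^ (m - T.card) * ∏ j ∈ T, X j, ?_, ?_⟩
  · have h1 := (isHomogeneous_X_pow (R := k) i (m - T.card)).mul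
      (IsHomogeneous.prod T (fun j => (X j : MvPolynomial (Fin r) k)) (fun _ => 1)
        (fun j _ => isHomogeneous_X k j))
    convert h1 using 1
    simp
    omega
  · intro T'
    rw [evalAt_mul]
    simp only [evalAt, AlgHom.toLinearMap_apply, map_pow, map_prod, aeval_X]
    by_cases h : T ⊆ T'
    · rw [if_pos h, if_pos (h hi), one_pow, one_mul]
      exact Finset.prod_eq_one fun j hj => if_pos (h hj)
    · obtain ⟨j, hj, hj'⟩ := Finset.not_subset.1 h
      rw [if_neg h, Finset.prod_eq_zero hj (if_neg hj'), mul_zero]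

/-- Forms of degree at least two separate the points of `P`: for a pair the monomial above works,
for a singleton one subtracts the monomials of the pairs of `P` containing it. -/
theorem exists_form_delta {m : ℕ} (hm : 2 ≤ m) {P : Finset (Finset (Fin r))}
    (hP : ∀ T ∈ P, T.Nonempty ∧ T.card ≤ 2) {T : Finset (Fin r)} (hT : T ∈ P) :
    ∃ f : MvPolynomial (Fin r) k, f.IsHomogeneous m ∧
      ∀ T' ∈ P, evalAt k T' f = if T' = T then 1 else 0 := by
  have h : ∀ T : Finset (Fin r), ∃ f : MvPolynomial (Fin r) k, T ∈ P → f.IsHomogeneous m ∧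
      ∀ T', evalAt k T' f = if T ⊆ T' then 1 else 0 := by
    intro T
    by_cases hT : T ∈ P
    · obtain ⟨f, hf⟩ := exists_monomial_eval (k := k) (hP T hT).1 ((hP T hT).2.trans hm)
      exact ⟨f, fun _ => hf⟩
    · exact ⟨0, fun h => absurd h hT⟩
  choose g hg using h
  refine ⟨g T - ∑ S ∈ P with T ⊂ S, g S, ?_, ?_⟩
  · exact (hg T hT).1.sub (IsHomogeneous.sum _ _ _ fun S hS => (hg S (Finset.mem_filter.1 hS).1).1)
  · intro T' hT'
    rw [map_sub, map_sum, (hg T hT).2]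
    have h1 : ∑ S ∈ P with T ⊂ S, evalAt k T' (g S) = if T ⊂ T' then 1 else 0 := by
      -- a strict superset of `T` in `P` has two elements, so it is contained in `T'` only if equal
      have h2 : ∀ S ∈ P.filter (fun S => T ⊂ S),
          evalAt k T' (g S) = if S = T' then (1 : k) else 0 := by
        intro S hS
        obtain ⟨hS, hTS⟩ := Finset.mem_filter.1 hS
        rw [(hg S hS).2]
        have hc : S ⊆ T' ↔ S = T' := by
          refine ⟨fun h => Finset.eq_of_subset_of_card_le h ?_, fun h => h.subset⟩
          have a1 := Finset.card_lt_card hTS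
          have a2 := (hP T hT).1.card_pos
          have a3 := (hP T' hT').2
          omega
        simp only [hc]
      rw [Finset.sum_congr rfl h2, Finset.sum_ite_eq']
      simp [hT']
    rw [h1]
    by_cases e1 : T' = T
    · subst e1; simp
    · have hc : T ⊂ T' ↔ T ⊆ T' :=
        ⟨fun h => h.subset, fun h => h.ssubset_of_ne (Ne.symm e1)⟩
      simp only [hc, if_neg e1, sub_self]

theorem exists_form_eval {m : ℕ} (hm : 2 ≤ m) {P : Finset (Finset (Fin r))}
    (hP : ∀ T ∈ P, T.Nonempty ∧ T.card ≤ 2) (w : Finset (Fin r) → k) :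
    ∃ f : MvPolynomial (Fin r) k, f.IsHomogeneous m ∧ ∀ T ∈ P, evalAt k T f = w T := by
  have h : ∀ T : Finset (Fin r), ∃ f : MvPolynomial (Fin r) k, T ∈ P → f.IsHomogeneous m ∧
      ∀ T' ∈ P, evalAt k T' f = if T' = T then 1 else 0 := by
    intro T
    by_cases hT : T ∈ P
    · obtain ⟨f, hf⟩ := exists_form_delta (k := k) hm hP hT
      exact ⟨f, fun _ => hf⟩
    · exact ⟨0, fun h => absurd h hT⟩
  choose g hg using h
  refine ⟨∑ S ∈ P, w S • g S, ?_, ?_⟩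
  · exact (homogeneousSubmodule (Fin r) k m).sum_mem fun S hS =>
      Submodule.smul_mem _ _ (hg S hS).1
  · intro T hT
    rw [map_sum]
    simp only [map_smul, smul_eq_mul]
    rw [Finset.sum_congr rfl fun S hS => by rw [(hg S hS).2 T hT]]
    simp [hT]

/-- A linear form is determined by its values at the coordinate points. -/
theorem linear_form_eq_sum {f : MvPolynomial (Fin r) k} (hf : f.IsHomogeneous 1) :
    f = ∑ i, evalAt k {i} f • X i := by
  have h1 : f ∈ Submodule.span k (Set.range (X : Fin r → MvPolynomial (Fin r) k)) := by
    rw [← homogeneousSubmodule_one_eq_span_X]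
    exact hf
  clear hf
  induction h1 using Submodule.span_induction with
  | mem x hx =>
    obtain ⟨i, rfl⟩ := hx
    simp [evalAt_X]
  | zero => simp
  | add x y _ _ hx hy =>
    simp only [map_add, add_smul, Finset.sum_add_distrib]
    rw [← hx, ← hy]
  | smul a x _ hx =>
    simp only [map_smul, smul_assoc]
    rw [← Finset.smul_sum, ← hx]

end Points

/-! ### The two functionals and the Hilbert function -/

section Main

variable {k : Type} [Field k] {r : ℕ}

/-- The pair of functionals dual to the forms `∑_{T ∈ P, T ≠ {z}} ℓ_T^e` and `x_z^e`. -/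
noncomputable def pairL (k : Type) [Field k] {r : ℕ} (P : Finset (Finset (Fin r))) (z : Fin r) :
    MvPolynomial (Fin r) k →ₗ[k] k × k :=
  (∑ T ∈ P.erase {z}, evalAt k T).prod (evalAt k {z})

theorem pairL_mul (P : Finset (Finset (Fin r))) (z : Fin r) (f g : MvPolynomial (Fin r) k) :
    pairL k P z (f * g) =
      (∑ T ∈ P.erase {z}, evalAt k T f * evalAt k T g, evalAt k {z} f * evalAt k {z} g) := by
  simp [pairL, evalAt_mul]

variable {P : Finset (Finset (Fin r))} {z : Fin r}

theorem pairL_mul_eq_zero_of_eval (f g : MvPolynomial (Fin r) k) (hs : ∀ i, {i} ∈ P)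
    (h : ∀ T ∈ P, evalAt k T f = 0) : pairL k P z (f * g) = 0 := by
  rw [pairL_mul, h _ (hs z), zero_mul, Finset.sum_eq_zero]
  · rfl
  · intro T hT
    rw [h T (Finset.mem_of_mem_erase hT), zero_mul]

/-- The complementary degree `e - d` is at least two, so its forms separate the points of `P`, and
testing against them detects each value of `f` separately. -/
theorem mem_annIdeal_iff_eval {e d : ℕ} (hd : d + 2 ≤ e)
    (hs : ∀ i, {i} ∈ P) (hP : ∀ T ∈ P, T.Nonempty ∧ T.card ≤ 2)
    {f : MvPolynomial (Fin r) k} (hf : f.IsHomogeneous d) :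
    f ∈ annIdeal (pairL k P z) e ↔ ∀ T ∈ P, evalAt k T f = 0 := by
  rw [mem_annIdeal_of_isHomogeneous (by omega) hf]
  constructor
  · intro h T hT
    obtain ⟨g, hg, hgv⟩ := exists_form_eval (k := k) (m := e - d) (by omega) hP
      (fun S => if S = T then 1 else 0)
    have h1 := h g hg
    rw [pairL_mul, Prod.mk_eq_zero] at h1
    obtain ⟨h1, h2⟩ := h1
    by_cases hTz : T = {z}
    · rw [← hTz, hgv T hT] at h2
      simpa using h2
    · rw [Finset.sum_eq_single_of_mem T (Finset.mem_erase.2 ⟨hTz, hT⟩), hgv T hT] at h1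
      · simpa using h1
      · intro S hS hST
        rw [hgv S (Finset.mem_of_mem_erase hS), if_neg hST, mul_zero]
  · intro h g _
    exact pairL_mul_eq_zero_of_eval f g hs h

theorem hilb_middle {e d : ℕ} (hd2 : 2 ≤ d) (hd : d + 2 ≤ e)
    (hs : ∀ i, {i} ∈ P) (hP : ∀ T ∈ P, T.Nonempty ∧ T.card ≤ 2) :
    hilb k r (annIdeal (pairL k P z) e) d = P.card := by
  rw [hilb_eq_finrank (W := P → k) (LinearMap.pi fun T : P => evalAt k T.1)]
  · simp
  · intro f hf
    rw [mem_annIdeal_iff_eval hd hs hP hf, funext_iff]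
    simp
  · intro w
    obtain ⟨f, hf, hfw⟩ := exists_form_eval (k := k) hd2 hP
      (fun T => if h : T ∈ P then w ⟨T, h⟩ else 0)
    refine ⟨f, hf, ?_⟩
    ext ⟨T, hT⟩
    simp [hfw T hT, hT]

theorem hilb_one {e : ℕ} (he : 3 ≤ e)
    (hs : ∀ i, {i} ∈ P) (hP : ∀ T ∈ P, T.Nonempty ∧ T.card ≤ 2) :
    hilb k r (annIdeal (pairL k P z) e) 1 = r := by
  rw [hilb_eq_finrank (W := Fin r → k) (LinearMap.pi fun i => evalAt k {i})]
  · simp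
  · intro f hf
    rw [mem_annIdeal_iff_eval (by omega) hs hP hf]
    constructor
    · intro h
      ext i
      exact h _ (hs i)
    · intro h T _
      rw [linear_form_eq_sum hf, Finset.sum_eq_zero, map_zero]
      intro i _
      have := congrFun h i
      simp only [LinearMap.pi_apply, Pi.zero_apply] at this
      rw [this, zero_smul]
  · intro w
    refine ⟨∑ i, w i • X i, ?_, ?_⟩
    · exact (homogeneousSubmodule (Fin r) k 1).sum_mem fun i _ =>
        Submodule.smul_mem _ _ (isHomogeneous_X k i)
    · ext i
      simp [evalAt_X]

/-- In degree `e - 1` the quotient is identified with `k^r` through `f ↦ ∑_T f(p_T) p_T`. The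
`z`-coordinate of this vector is `f(p_{z})`, and the others only involve `T ≠ {z}`. -/
theorem hilb_pred {e : ℕ} (he : 3 ≤ e)
    (hs : ∀ i, {i} ∈ P) (hP : ∀ T ∈ P, T.Nonempty ∧ T.card ≤ 2)
    (hz : ∀ T ∈ P, z ∈ T → T = {z}) :
    hilb k r (annIdeal (pairL k P z) e) (e - 1) = r := by
  let B : MvPolynomial (Fin r) k →ₗ[k] (Fin r → k) :=
    LinearMap.pi fun i => ∑ T ∈ P, (if i ∈ T then (1 : k) else 0) • evalAt k T
  have hB : ∀ f i, B f i = ∑ T ∈ P, evalAt k T f * evalAt k T (X i) := by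
    intro f i
    simp only [B, LinearMap.pi_apply, LinearMap.sum_apply, LinearMap.smul_apply, smul_eq_mul,
      evalAt_X]
    exact Finset.sum_congr rfl fun T _ => mul_comm _ _
  have hX : ∀ f i, (pairL k P z (f * X i)) =
      if i = z then (0, B f i) else (B f i, 0) := by
    intro f i
    rw [pairL_mul, hB, ← Finset.add_sum_erase P _ (hs z)]
    split_ifs with h
    · subst h
      have h0 : ∑ T ∈ P.erase {i}, evalAt k T f * evalAt k T (X i) = 0 := by
        refine Finset.sum_eq_zero fun T hT => ?_
        obtain ⟨h1, h2⟩ := Finset.mem_erase.1 hT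
        rw [evalAt_X, if_neg (fun h => h1 (hz T h2 h)), mul_zero]
      rw [h0, add_zero]
    · simp [evalAt_X, h]
  rw [hilb_eq_finrank (W := Fin r → k) B]
  · simp
  · intro f hf
    rw [mem_annIdeal_of_isHomogeneous (by omega) hf, show e - (e - 1) = 1 by omega]
    constructor
    · intro h
      ext i
      have h1 := h (X i) (isHomogeneous_X k i)
      rw [hX] at h1
      split_ifs at h1
      · exact (Prod.mk_eq_zero.1 h1).2
      · exact (Prod.mk_eq_zero.1 h1).1
    · intro h g hg
      rw [linear_form_eq_sum hg, Finset.mul_sum, map_sum]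
      refine Finset.sum_eq_zero fun i _ => ?_
      rw [mul_smul_comm, map_smul, hX, h]
      simp
  · intro w
    -- prescribe `w i` at the coordinate points and `0` at the remaining points
    obtain ⟨f, hf, hfw⟩ := exists_form_eval (k := k) (m := e - 1) (by omega) hP
      (fun T => ∑ i, if T = {i} then w i else 0)
    refine ⟨f, hf, ?_⟩
    ext i
    rw [hB, Finset.sum_congr rfl fun T hT => by rw [hfw T hT, evalAt_X]]
    simp only [Finset.sum_mul]
    rw [Finset.sum_comm]
    have h1 : ∀ j, ∑ T ∈ P, (if T = {j} then w j else 0) * (if i ∈ T then (1 : k) else 0) =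
        if i = j then w j else 0 := by
      intro j
      rw [Finset.sum_eq_single_of_mem {j} (hs j)]
      · simp
      · intro T _ hT
        rw [if_neg hT, zero_mul]
    simp only [h1]
    simp

theorem hilb_top {e : ℕ} (he : 2 ≤ e)
    (hs : ∀ i, {i} ∈ P) (hP : ∀ T ∈ P, T.Nonempty ∧ T.card ≤ 2)
    {y : Fin r} (hy : y ≠ z) :
    hilb k r (annIdeal (pairL k P z) e) e = 2 := by
  rw [hilb_eq_finrank (W := k × k) (pairL k P z)]
  · simp
  · intro f hf
    rw [mem_annIdeal_of_isHomogeneous le_rfl hf, Nat.sub_self]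
    constructor
    · intro h
      simpa using h 1 (isHomogeneous_one _ _)
    · intro h g hg
      rw [← mem_homogeneousSubmodule, homogeneousSubmodule_zero, Submodule.mem_one] at hg
      obtain ⟨c, rfl⟩ := hg
      rw [mul_comm, ← Algebra.smul_def, map_smul, h, smul_zero]
  · rintro ⟨a, c⟩
    obtain ⟨f, hf, hfw⟩ := exists_form_eval (k := k) he hP
      (fun T => if T = {z} then c else if T = {y} then a else 0)
    refine ⟨f, hf, ?_⟩
    rw [← mul_one f, pairL_mul]
    have h1 : ∀ T, evalAt k T (1 : MvPolynomial (Fin r) k) = 1 := fun T => by simp [evalAt]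
    simp only [h1, mul_one]
    rw [hfw _ (hs z), if_pos rfl]
    rw [Finset.sum_eq_single_of_mem {y} (Finset.mem_erase.2 ⟨by simpa using hy, hs y⟩)]
    · rw [hfw _ (hs y), if_neg (by simpa using hy), if_pos rfl]
    · intro T hT hTy
      obtain ⟨h2, h3⟩ := Finset.mem_erase.1 hT
      rw [hfw T h3, if_neg h2, if_neg hTy]

end Main

/-! ### Choice of the points -/

/-- All singletons together with `b - r` pairs avoiding `z`. -/
theorem exists_points {r b : ℕ} (hr : 2 ≤ r) (hb1 : r ≤ b) (hb2 : b ≤ r.choose 2 + 1)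
    (z : Fin r) : ∃ P : Finset (Finset (Fin r)), (∀ i, {i} ∈ P) ∧
      (∀ T ∈ P, T.Nonempty ∧ T.card ≤ 2) ∧ (∀ T ∈ P, z ∈ T → T = {z}) ∧ P.card = b := by
  have hc : b - r ≤ (Finset.powersetCard 2 (Finset.univ.erase z)).card := by
    obtain ⟨s, rfl⟩ : ∃ s, r = s + 1 := ⟨r - 1, by omega⟩
    rw [Finset.card_powersetCard, Finset.card_erase_of_mem (Finset.mem_univ z), Finset.card_univ,
      Fintype.card_fin]
    have := Nat.choose_succ_succ s 1
    simp at this ⊢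
    omega
  obtain ⟨S, hS, hSc⟩ := Finset.exists_subset_card_eq hc
  have hS' : ∀ T ∈ S, z ∉ T ∧ T.card = 2 := by
    intro T hT
    obtain ⟨h1, h2⟩ := Finset.mem_powersetCard.1 (hS hT)
    exact ⟨fun h => by simpa using h1 h, h2⟩
  have hmem : ∀ T, T ∈ Finset.univ.image (fun i : Fin r => ({i} : Finset (Fin r))) ∪ S ↔
      (∃ i, T = {i}) ∨ T ∈ S := by
    intro T
    simp [eq_comm]
  refine ⟨Finset.univ.image (fun i : Fin r => ({i} : Finset (Fin r))) ∪ S, ?_, ?_, ?_, ?_⟩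
  · intro i
    exact (hmem _).2 (Or.inl ⟨i, rfl⟩)
  · intro T hT
    rcases (hmem T).1 hT with ⟨i, rfl⟩ | h
    · simp
    · have := (hS' T h).2
      exact ⟨Finset.card_pos.1 (by omega), by omega⟩
  · intro T hT hzT
    rcases (hmem T).1 hT with ⟨i, rfl⟩ | h
    · simpa [eq_comm] using hzT
    · exact absurd hzT (hS' T h).1
  · rw [Finset.card_union_of_disjoint, hSc, Finset.card_image_of_injective, Finset.card_univ,
      Fintype.card_fin]
    · omega
    · exact Finset.singleton_injective
    · rw [Finset.disjoint_left]
      intro T hT hTS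
      obtain ⟨i, -, rfl⟩ := Finset.mem_image.1 hT
      simpa using (hS' _ hTS).2

/-- Theorem 3.5 i), existence: for all `r ≥ 2`, `e ≥ 4` and `r ≤ b ≤ C(r,2) + 1`, there is a
level algebra of type 2, codimension `r` and socle degree `e` whose `h`-vector satisfies
`h_{e-2} = b` and `h_{e-1} = r`. -/
theorem stmt7 (k : Type) [Field k] [CharZero k] (r e b : ℕ)
    (hr : 2 ≤ r) (he : 4 ≤ e) (hb1 : r ≤ b) (hb2 : b ≤ r.choose 2 + 1) :
    ∃ I : Ideal (MvPolynomial (Fin r) k),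
      IsLevelQuot k r e 2 I ∧ hilb k r I 1 = r ∧
      hilb k r I (e - 2) = b ∧ hilb k r I (e - 1) = r := by
  obtain ⟨P, hs, hP, hz, hc⟩ := exists_points hr hb1 hb2 (⟨0, by omega⟩ : Fin r)
  refine ⟨annIdeal (pairL k P ⟨0, by omega⟩) e, isLevelQuot_annIdeal ?_, ?_, ?_, ?_⟩
  · exact hilb_top (by omega) hs hP (y := ⟨1, by omega⟩) (by simp)
  · exact hilb_one (by omega) hs hP
  · rw [hilb_middle (by omega) (by omega) hs hP, hc]
  · exact hilb_pred (by omega) hs hP hz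
end

section
/- Let 2 ≤ r ≤ 5, and let A be a level standard graded artinian algebra of type 2, codimension r and socle degree e over k with h-vector (1, r, h_2, …, h_{e-1}, 2) satisfying h_{e-1} = r. Then for every integer i with 2 ≤ i ≤ e−2 one has h_{e−i} = h_i and h_{e−i} ≤ min{ C(r−2+i, i) + 1, C(r−2+e−i, e−i) + 1 }. -/
/-!
Write `A_i` for the degree `i` piece of `A = k[x_1,…,x_r]/I`; it is the `i`-th power `V ^ i` of
the subspace `V = A_1`. A functional `φ` on `A_e` gives pairings `A_i × A_{e-i} → k`,
`(a, b) ↦ φ (a * b)`; let `K_i ⊆ A_i` be their left kernels. As the two kernels of a pairing have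
the same codimension, `h_i - dim K_i = h_{e-i} - dim K_{e-i}`, so symmetry follows once all `K_i`
with `1 ≤ i ≤ e-1` have the same dimension.

Take `φ` for which the pairing `A_1 × A_{e-1} → k` has the largest rank `ρ`, and `ψ` completing `φ`
to a pair of coordinates on `A_e`. The two `r × r` pairings given by `φ` and `ψ` form a pencil which,
by levelness, has no common kernel on either side. Maximality of `ρ` makes `φ` degenerate only in a
restricted way: in block form `φ = (1 0; 0 0)` and `ψ = (P B; C 0)` with `C B = 0`, where `B` is
injective and `C` surjective. Hence `2 (r - ρ) ≤ ρ`, and `r ≤ 5` forces `ρ ≥ r - 1`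
(`le_finrank_range_add_one`, `exists_functionals`), that is `dim K_1 = dim K_{e-1} ≤ 1`. Because
`K_{e-1}` is at most a line, some linear form `z` is such that every linear form is congruent to a
multiple of `z` modulo those killing `K_{e-1}`; by levelness multiplication by `z` is injective on
`K_i` for `i ≤ e-2`, so the dimensions of the `K_i` increase with `i` and are all equal
(`finrank_leftKer_pow`).

For the upper bound it is enough to find a hyperplane `U` of `A_1` and a subspace `L` of dimension at
most `1` with `A_i ⊆ U ^ i + L`, as `U ^ i` is spanned by the monomials of degree `i` in `r - 1`
variables. If `K_1` contains a linear form `w ≠ 0`, let `U` be a complement of `w` and `L = K_i`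
(`pow_le_of_leftKer_ne_bot`). Otherwise `ψ (x * b) = φ (M x * b)` for an endomorphism `M` of `A_1`,
not a homothety, and `x * M y = y * M x` in `A_2` (`exists_mul_comm`). If `M x₁` is not a multiple of
`x₁`, choose `U ∋ x₁` complementary to `M x₁`: the relations `y * M x₁ = x₁ * M y` rewrite every
monomial involving `M x₁`, except `M x₁ * x₁ ^ (i-1)`, in terms of the others
(`pow_le_of_mul_comm`).
-/

open MvPolynomial

/-! ### Pencils of linear maps of bounded rank -/

/-- Linear independence is an open condition along a line: if it holds at `t = 0`, then it holds
at some other parameter. -/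
theorem exists_ne_zero_linearIndependent_add_smul {k W : Type*} [Field k] [Infinite k]
    [AddCommGroup W] [Module k W] {n : ℕ} (c d : Fin n → W) (hc : LinearIndependent k c) :
    ∃ t : k, t ≠ 0 ∧ LinearIndependent k (fun i => c i + t • d i) := by
  obtain ⟨g, hg⟩ := (Fintype.linearCombination k c).exists_leftInverse_of_injective
    (LinearMap.ker_eq_bot.2 (linearIndependent_iff_injective_fintypeLinearCombination.1 hc))
  have hgc : ∀ i, g (c i) = Pi.single i 1 := by
    intro i
    have := LinearMap.congr_fun hg (Pi.single i 1)
    simpa [Fintype.linearCombination_apply_single] using this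
  -- up to the sign of `t`, a determinant `det (1 - s N)` that is a polynomial in `s`, equal to `1`
  -- at `s = 0`; the extra factor `X` in `hp` keeps `s` away from `0`
  let N : Matrix (Fin n) (Fin n) k := Matrix.of fun i => g (d i)
  have hp : (N.charpolyRev * Polynomial.X) ≠ 0 := by
    refine mul_ne_zero (fun h => ?_) Polynomial.X_ne_zero
    have := N.eval_charpolyRev
    simp [h] at this
  obtain ⟨s, hs⟩ : ∃ s, (N.charpolyRev * Polynomial.X).eval s ≠ 0 := by
    by_contra! h
    exact hp (Polynomial.funext (by simpa using h))
  rw [Polynomial.eval_mul, Polynomial.eval_X] at hs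
  refine ⟨-s, neg_ne_zero.2 (right_ne_zero_of_mul hs), ?_⟩
  have hdet : (1 + (-s) • N).det ≠ 0 := by
    convert left_ne_zero_of_mul hs using 1
    rw [Matrix.charpolyRev, ← Polynomial.coe_evalRingHom, RingHom.map_det]
    congr 1
    ext i j
    simp only [Matrix.add_apply, Matrix.one_apply, Matrix.smul_apply, Matrix.map_apply,
      RingHom.mapMatrix_apply, Matrix.sub_apply, Polynomial.coe_evalRingHom, smul_eq_mul,
      Polynomial.eval_sub, Polynomial.eval_mul, Polynomial.eval_X, Polynomial.eval_C]
    split_ifs <;> simp [sub_eq_add_neg]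
  have := Matrix.linearIndependent_rows_of_det_ne_zero hdet
  refine LinearIndependent.of_comp g ?_
  have hrow : g ∘ (fun i => c i + -s • d i) = (1 + (-s) • N : Matrix (Fin n) (Fin n) k) := by
    funext i
    ext j
    simp [hgc, N, Matrix.one_apply, Pi.single_apply, eq_comm]
  rw [hrow]
  exact this

/-- If `H` has maximal rank in the pencil `H + t G`, a vector lying in the image of all the maps
with `t ≠ 0` lies in the image of `H`: otherwise it would remain independent of a deformed basis of
the image of `H`, and the rank would go up. -/
theorem mem_range_of_forall_mem_range_add_smul {k V W : Type*} [Field k] [Infinite k]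
    [AddCommGroup V] [Module k V] [AddCommGroup W] [Module k W] [FiniteDimensional k W]
    (H G : V →ₗ[k] W)
    (hmax : ∀ t : k, Module.finrank k (LinearMap.range (H + t • G)) ≤
      Module.finrank k (LinearMap.range H))
    (w : W) (hw : ∀ t : k, t ≠ 0 → w ∈ LinearMap.range (H + t • G)) :
    w ∈ LinearMap.range H := by
  by_contra hn
  let b := Module.finBasis k (LinearMap.range H)
  choose v hv using fun i => (b i).2
  have hb : LinearIndependent k (fun i => (b i : W)) :=
    b.linearIndependent.map' (LinearMap.range H).subtype (Submodule.ker_subtype _)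
  have hspan : Submodule.span k (Set.range fun i => (b i : W)) ≤ LinearMap.range H := by
    rw [Submodule.span_le]
    rintro _ ⟨i, rfl⟩
    exact (b i).2
  have hc : LinearIndependent k (Fin.cons w (fun i => (b i : W)) : Fin _ → W) :=
    linearIndependent_finCons.2 ⟨hb, fun h => hn (hspan h)⟩
  obtain ⟨t, ht, hli⟩ := exists_ne_zero_linearIndependent_add_smul _
    (Fin.cons 0 (fun i => G (v i))) hc
  have hmem : ∀ i, (Fin.cons w (fun i => (b i : W)) : Fin _ → W) i +
      t • (Fin.cons 0 (fun i => G (v i)) : Fin _ → W) i ∈ LinearMap.range (H + t • G) := by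
    intro i
    refine Fin.cases ?_ (fun j => ?_) i
    · simpa using hw t ht
    · exact ⟨v j, by simp [hv]⟩
  have h1 : LinearIndependent k (fun i => (⟨_, hmem i⟩ : LinearMap.range (H + t • G))) :=
    LinearIndependent.of_comp (LinearMap.range (H + t • G)).subtype hli
  have h2 := h1.fintype_card_le_finrank
  rw [Fintype.card_fin] at h2
  have := hmax t
  omega

theorem finrank_map_add_finrank_inf_ker {k V W : Type*} [Field k]
    [AddCommGroup V] [Module k V] [AddCommGroup W] [Module k W]
    (f : V →ₗ[k] W) (S : Submodule k V) [FiniteDimensional k S] :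
    Module.finrank k (S.map f) + Module.finrank k (S ⊓ LinearMap.ker f : Submodule k V) =
      Module.finrank k S := by
  have h := (f.domRestrict S).finrank_range_add_finrank_ker
  rw [LinearMap.range_domRestrict, LinearMap.ker_domRestrict,
    ← Submodule.finrank_map_subtype_eq S, Submodule.map_comap_subtype] at h
  exact h

/-- If `H` has the largest rank among the matrices `H + t G`, in a pencil of `r × r` matrices,
`r ≤ 5`, without common kernel or cokernel, then that rank is at least `r - 1`. With `K = ker H` and `L = H⁻¹ (G K)`, maximality of the rank of `H` gives
`G K ⊆ im H` and `G L ⊆ im H`, so that `2 dim K = dim L ≤ rank H`. -/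
theorem le_finrank_range_add_one {k V W : Type*} [Field k] [Infinite k]
    [AddCommGroup V] [Module k V] [FiniteDimensional k V]
    [AddCommGroup W] [Module k W] [FiniteDimensional k W]
    (H G : V →ₗ[k] W) {r : ℕ} (hr : r ≤ 5)
    (hV : Module.finrank k V = r) (hW : Module.finrank k W = r)
    (hker : LinearMap.ker H ⊓ LinearMap.ker G = ⊥)
    (hran : LinearMap.range H ⊔ LinearMap.range G = ⊤)
    (hmax : ∀ t : k, Module.finrank k (LinearMap.range (H + t • G)) ≤
      Module.finrank k (LinearMap.range H)) :
    r ≤ Module.finrank k (LinearMap.range H) + 1 := by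
  have key := mem_range_of_forall_mem_range_add_smul H G hmax
  set K := LinearMap.ker H with hK
  set L := (K.map G).comap H with hL
  have hGK : K.map G ≤ LinearMap.range H := by
    rintro _ ⟨x, hx, rfl⟩
    refine key _ fun t ht => ⟨t⁻¹ • x, ?_⟩
    have : H x = 0 := hx
    simp [this, ht]
  have hGL : L.map G ≤ LinearMap.range H := by
    rintro _ ⟨u, ⟨x, hx, hxu⟩, rfl⟩
    have hx0 : H x = 0 := hx
    -- `(H + tG)(x - tu) = -t² G u` because `H u = G x` and `H x = 0`.
    refine key _ fun t ht => ⟨-(t⁻¹ * t⁻¹) • (x - t • u), ?_⟩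
    simp only [map_smul, LinearMap.add_apply, LinearMap.smul_apply, map_sub, hx0, ← hxu,
      smul_sub, smul_add, smul_smul]
    simp [ht]
  have hdimGK := finrank_map_add_finrank_inf_ker G K
  rw [hker, finrank_bot] at hdimGK
  have hdimL := finrank_map_add_finrank_inf_ker H L
  have hKL : L ⊓ LinearMap.ker H = K :=
    inf_eq_right.2 fun x (hx : H x = 0) => by simp [hL, hx]
  rw [hKL, hL, Submodule.map_comap_eq, inf_eq_right.2 hGK, ← hL] at hdimL
  -- `G` maps `V` onto `W ⧸ im H` and kills `L`, so `dim L` is at most the rank of `H`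
  let q := (LinearMap.range H).mkQ ∘ₗ G
  have hq : LinearMap.range q = ⊤ := by
    have h := congrArg (Submodule.map (LinearMap.range H).mkQ) hran
    rw [Submodule.map_sup, Submodule.map_top, Submodule.range_mkQ] at h
    rw [LinearMap.range_comp, ← h]
    simp
  have hLq : L ≤ LinearMap.ker q := by
    intro x hx
    simpa [q] using hGL ⟨x, hx, rfl⟩
  have h1 := q.finrank_range_add_finrank_ker
  have h2 := H.finrank_range_add_finrank_ker
  have h3 := (LinearMap.range H).finrank_quotient_add_finrank
  have h4 := Submodule.finrank_mono hLq
  rw [hq, finrank_top] at h1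
  rw [← hK] at h2
  omega

/-! ### The pairings defined by a functional -/

theorem finrank_range_flip {k M N : Type*} [Field k]
    [AddCommGroup M] [Module k M] [FiniteDimensional k M]
    [AddCommGroup N] [Module k N] [FiniteDimensional k N] (f : M →ₗ[k] Module.Dual k N) :
    Module.finrank k (LinearMap.range (LinearMap.flip f)) =
      Module.finrank k (LinearMap.range f) := by
  have h : LinearMap.flip f = f.dualMap ∘ₗ (Module.evalEquiv k N).toLinearMap := by
    ext x y
    simp
  rw [h, LinearMap.range_comp, LinearEquiv.range, Submodule.map_top,
    LinearMap.finrank_range_dualMap_eq_finrank_range]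

/-- The pairing `(a, b) ↦ φ (a * b)` between two subspaces `P`, `Q` of `A`. -/
noncomputable def mulPairing {k A : Type*} [Field k] [CommRing A] [Algebra k A]
    (φ : A →ₗ[k] k) (P Q : Submodule k A) : P →ₗ[k] Module.Dual k Q :=
  ((LinearMap.mul k A).compr₂ φ).domRestrict₁₂ P Q

theorem mulPairing_apply {k A : Type*} [Field k] [CommRing A] [Algebra k A]
    (φ : A →ₗ[k] k) (P Q : Submodule k A) (a : P) (b : Q) :
    mulPairing φ P Q a b = φ (a * b) := rfl

/-- The elements of `P` orthogonal to `Q` for the pairing `(a, b) ↦ φ (a * b)`. For `P = A_i`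
and `Q = A_{e-i}` this is the degree `i` piece of the ideal defining the Gorenstein quotient of
`A` with dual socle generator `φ`. -/
def leftKer {k A : Type*} [Field k] [CommRing A] [Algebra k A]
    (φ : A →ₗ[k] k) (P Q : Submodule k A) : Submodule k A where
  carrier := {a | a ∈ P ∧ ∀ b ∈ Q, φ (a * b) = 0}
  add_mem' := fun {a b} ha hb => ⟨P.add_mem ha.1 hb.1, fun c hc => by
    rw [add_mul, map_add, ha.2 c hc, hb.2 c hc, add_zero]⟩
  zero_mem' := ⟨P.zero_mem, fun c _ => by rw [zero_mul, map_zero]⟩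
  smul_mem' := fun t a ha => ⟨P.smul_mem t ha.1, fun c hc => by
    rw [smul_mul_assoc, map_smul, ha.2 c hc, smul_zero]⟩

theorem mem_leftKer {k A : Type*} [Field k] [CommRing A] [Algebra k A]
    {φ : A →ₗ[k] k} {P Q : Submodule k A} {a : A} :
    a ∈ leftKer φ P Q ↔ a ∈ P ∧ ∀ b ∈ Q, φ (a * b) = 0 := Iff.rfl

theorem leftKer_le {k A : Type*} [Field k] [CommRing A] [Algebra k A]
    (φ : A →ₗ[k] k) (P Q : Submodule k A) : leftKer φ P Q ≤ P := fun _ h => h.1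

theorem finrank_range_add_finrank_leftKer {k A : Type*} [Field k] [CommRing A] [Algebra k A]
    (φ : A →ₗ[k] k) (P Q : Submodule k A) [FiniteDimensional k P] :
    Module.finrank k (LinearMap.range (mulPairing φ P Q)) + Module.finrank k (leftKer φ P Q) =
      Module.finrank k P := by
  rw [← (mulPairing φ P Q).finrank_range_add_finrank_ker,
    ← Submodule.finrank_map_subtype_eq P (LinearMap.ker (mulPairing φ P Q))]
  have : leftKer φ P Q = (LinearMap.ker (mulPairing φ P Q)).map P.subtype := by
    ext a
    simp [mem_leftKer, LinearMap.ext_iff, mulPairing_apply, and_comm]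
  rw [this]

/-- The two kernels of the pairing of `P` and `Q` have the same codimension. -/
theorem finrank_add_finrank_leftKer_comm {k A : Type*} [Field k] [CommRing A] [Algebra k A]
    (φ : A →ₗ[k] k) (P Q : Submodule k A) [FiniteDimensional k P] [FiniteDimensional k Q] :
    Module.finrank k P + Module.finrank k (leftKer φ Q P) =
      Module.finrank k Q + Module.finrank k (leftKer φ P Q) := by
  have h1 := finrank_range_add_finrank_leftKer φ P Q
  have h2 := finrank_range_add_finrank_leftKer φ Q P
  have h4 : mulPairing φ Q P = LinearMap.flip (mulPairing φ P Q) := by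
    ext b a
    simp [mulPairing_apply, mul_comm]
  have h3 : Module.finrank k (LinearMap.range (mulPairing φ Q P)) =
      Module.finrank k (LinearMap.range (mulPairing φ P Q)) := by
    rw [h4]
    exact finrank_range_flip _
  omega

/-! ### Dimensions of powers of a subspace -/

open MvPolynomial in
theorem finrank_homogeneousSubmodule_le (k : Type*) [Field k] (m i : ℕ) :
    Module.finrank k (homogeneousSubmodule (Fin m) k i) ≤ (m + i - 1).choose i := by
  classical
  have h : homogeneousSubmodule (Fin m) k i = Submodule.span k
      (((Finset.univ : Finset (Fin m)).finsuppAntidiag i).image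
        (fun d => (monomial d (1 : k))) : Finset (MvPolynomial (Fin m) k)) := by
    rw [homogeneousSubmodule_eq_finsupp_supported, AddMonoidAlgebra.supported_eq_span_single]
    congr 1
    ext p
    simp [single_eq_monomial, Finsupp.degree_eq_sum]
  rw [h]
  refine (finrank_span_finset_le_card _).trans (Finset.card_image_le.trans ?_)
  rw [Finset.card_finsuppAntidiag_nat_eq_choose]
  simp

open MvPolynomial in
/-- The `i`-fold products of elements of an `m`-dimensional subspace span a space of dimension
at most the number of monomials of degree `i` in `m` variables. -/
theorem finrank_pow_le {k A : Type*} [Field k] [CommRing A] [Algebra k A]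
    (U : Submodule k A) [FiniteDimensional k U] (i : ℕ) :
    Module.finrank k (U ^ i : Submodule k A) ≤ (Module.finrank k U + i - 1).choose i := by
  let b := Module.finBasis k U
  let f : MvPolynomial (Fin (Module.finrank k U)) k →ₐ[k] A := aeval fun j => (b j : A)
  have hU : U = (homogeneousSubmodule (Fin (Module.finrank k U)) k 1).map f.toLinearMap := by
    rw [homogeneousSubmodule_one_eq_span_X, Submodule.map_span, ← Set.range_comp]
    have h := congrArg (Submodule.map U.subtype) b.span_eq
    rw [Submodule.map_span, ← Set.range_comp, Submodule.map_top, Submodule.range_subtype] at h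
    conv_lhs => rw [← h]
    congr 2
    ext j
    simp [f]
  have hUi : U ^ i = (homogeneousSubmodule (Fin (Module.finrank k U)) k i).map f.toLinearMap := by
    rw [← homogeneousSubmodule_one_pow, Submodule.map_pow, ← hU]
  rw [hUi]
  have : FiniteDimensional k (homogeneousSubmodule (Fin (Module.finrank k U)) k i) :=
    Module.Finite.iff_fg.2 (homogeneousSubmodule_fg _ _ _)
  exact (Submodule.finrank_map_le _ _).trans (finrank_homogeneousSubmodule_le k _ _)

/-! ### Level algebras of type two -/

section Level

variable {k A : Type*} [Field k] [CommRing A] [Algebra k A] {V : Submodule k A} {e : ℕ}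

/-- In a level algebra an element of degree `i` is detected by its products with degree `j`
elements, as long as `i + j` does not exceed the socle degree. -/
theorem eq_zero_of_forall_pow_mul (hlev : ∀ i < e, ∀ a ∈ V ^ i, (∀ v ∈ V, a * v = 0) → a = 0) :
    ∀ j i, i + j ≤ e → ∀ a ∈ V ^ i, (∀ b ∈ V ^ j, a * b = 0) → a = 0 := by
  intro j
  induction j with
  | zero =>
    intro i _ a _ h
    simpa using h 1 (by rw [pow_zero]; exact Submodule.one_le.1 le_rfl)
  | succ j ih =>
    intro i hij a ha h
    refine ih i (by omega) a ha fun b hb => ?_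
    refine hlev (i + j) (by omega) _ (by rw [pow_add]; exact Submodule.mul_mem_mul ha hb) ?_
    intro v hv
    rw [mul_assoc]
    exact h _ (by rw [pow_succ]; exact Submodule.mul_mem_mul hb hv)

/-- The pieces `K_i` are stable under multiplication by forms. -/
theorem mul_mem_leftKer_pow {φ : A →ₗ[k] k} {i j : ℕ} (hij : i + j ≤ e) {a b : A}
    (ha : a ∈ leftKer φ (V ^ i) (V ^ (e - i))) (hb : b ∈ V ^ j) :
    a * b ∈ leftKer φ (V ^ (i + j)) (V ^ (e - (i + j))) := by
  refine ⟨by rw [pow_add]; exact Submodule.mul_mem_mul ha.1 hb, fun c hc => ?_⟩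
  rw [mul_assoc]
  refine ha.2 _ ?_
  have : e - i = j + (e - (i + j)) := by omega
  rw [this, pow_add]
  exact Submodule.mul_mem_mul hb hc

/-- A functional `φ` whose pairing `A_1 × A_{e-1} → k` has rank at least `r - 1` exists, together
with a second functional `ψ` such that `φ` and `ψ` are coordinates on `A_e`. -/
theorem exists_functionals [Infinite k] [FiniteDimensional k V] {r : ℕ} (he : 1 ≤ e)
    (hr2 : 2 ≤ r) (hr5 : r ≤ 5)
    (h1 : Module.finrank k V = r) (hpen : Module.finrank k (V ^ (e - 1) : Submodule k A) = r)
    (he2 : Module.finrank k (V ^ e : Submodule k A) = 2)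
    (hlev : ∀ i < e, ∀ a ∈ V ^ i, (∀ v ∈ V, a * v = 0) → a = 0) :
    ∃ φ ψ : A →ₗ[k] k, (∀ a ∈ V ^ e, φ a = 0 → ψ a = 0 → a = 0) ∧
      Module.finrank k (leftKer φ V (V ^ (e - 1))) ≤ 1 := by
  have hVe : V * V ^ (e - 1) = V ^ e := by rw [← pow_succ', Nat.sub_add_cancel he]
  have hfe : FiniteDimensional k (V ^ e : Submodule k A) :=
    Module.finite_of_finrank_pos (by omega)
  have hfe1 : FiniteDimensional k (V ^ (e - 1) : Submodule k A) :=
    Module.finite_of_finrank_pos (by omega)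
  -- maximal rank means minimal kernel
  obtain ⟨φ, hφ⟩ : ∃ φ : A →ₗ[k] k, ∀ φ' : A →ₗ[k] k,
      Module.finrank k (leftKer φ V (V ^ (e - 1))) ≤
        Module.finrank k (leftKer φ' V (V ^ (e - 1))) :=
    ⟨Function.argmin (fun φ : A →ₗ[k] k => Module.finrank k (leftKer φ V (V ^ (e - 1)))),
      fun φ' => Function.argmin_le
        (fun φ : A →ₗ[k] k => Module.finrank k (leftKer φ V (V ^ (e - 1)))) φ'⟩
  have hφ0 : ∃ a ∈ V ^ e, φ a ≠ 0 := by
    by_contra! h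
    obtain ⟨⟨a, ha⟩, ha0⟩ := (Module.finrank_pos_iff_exists_ne_zero (R := k)
      (M := (V ^ e : Submodule k A))).1 (by omega)
    obtain ⟨φ', hφ'⟩ : ∃ φ' : A →ₗ[k] k, φ' a ≠ 0 := by
      by_contra! h'
      exact ha0 (Subtype.ext ((Module.forall_dual_apply_eq_zero_iff k a).1 h'))
    have hK : leftKer φ V (V ^ (e - 1)) = V :=
      le_antisymm (leftKer_le _ _ _) fun x hx =>
        ⟨hx, fun b hb => h _ (hVe ▸ Submodule.mul_mem_mul hx hb)⟩
    have hle := hφ φ'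
    rw [hK] at hle
    have hK' := Submodule.eq_of_le_of_finrank_le (leftKer_le φ' V (V ^ (e - 1))) hle
    have : V ^ e ≤ LinearMap.ker φ' := by
      rw [← hVe, Submodule.mul_le]
      intro x hx b hb
      rw [← hK'] at hx
      exact hx.2 b hb
    exact hφ' (this ha)
  have hψ : ∃ ψ : A →ₗ[k] k, ∀ a ∈ V ^ e, φ a = 0 → ψ a = 0 → a = 0 := by
    have hd := finrank_map_add_finrank_inf_ker φ (V ^ e)
    have hd1 : Module.finrank k ((V ^ e).map φ) = 1 := by
      have hle := (Submodule.finrank_le ((V ^ e).map φ))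
      rw [Module.finrank_self] at hle
      have hne : Module.finrank k ((V ^ e).map φ) ≠ 0 := by
        rw [Submodule.finrank_eq_zero.ne, Submodule.ne_bot_iff]
        obtain ⟨a, ha, ha0⟩ := hφ0
        exact ⟨φ a, ⟨a, ha, rfl⟩, ha0⟩
      omega
    obtain ⟨⟨w, hw⟩, hw0, hws⟩ := finrank_eq_one_iff'.1
      (show Module.finrank k (V ^ e ⊓ LinearMap.ker φ : Submodule k A) = 1 by omega)
    obtain ⟨ψ, hψ⟩ : ∃ ψ : A →ₗ[k] k, ψ w ≠ 0 := by
      by_contra! h'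
      exact hw0 (Subtype.ext ((Module.forall_dual_apply_eq_zero_iff k w).1 h'))
    refine ⟨ψ, fun a ha ha1 ha2 => ?_⟩
    obtain ⟨c, hc⟩ := hws ⟨a, ha, ha1⟩
    have hc' : c • w = a := congrArg Subtype.val hc
    rw [← hc', map_smul, smul_eq_mul] at ha2
    rw [← hc', (mul_eq_zero.1 ha2).resolve_right hψ, zero_smul]
  obtain ⟨ψ, hψ⟩ := hψ
  refine ⟨φ, ψ, hψ, ?_⟩
  have hlev' := eq_zero_of_forall_pow_mul hlev
  have hrank := fun φ' : A →ₗ[k] k => finrank_range_add_finrank_leftKer φ' V (V ^ (e - 1))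
  have := le_finrank_range_add_one (mulPairing φ V (V ^ (e - 1))) (mulPairing ψ V (V ^ (e - 1)))
    hr5 h1 (by rw [Subspace.dual_finrank_eq, hpen]) ?_ ?_ ?_
  · have := hrank φ
    omega
  · rw [eq_bot_iff]
    rintro ⟨x, hx⟩ ⟨hx1, hx2⟩
    refine Subtype.ext (hlev' (e - 1) 1 (by omega) x (by rwa [pow_one]) fun b hb => ?_)
    exact hψ _ (hVe ▸ Submodule.mul_mem_mul hx hb) (LinearMap.congr_fun hx1 ⟨b, hb⟩)
      (LinearMap.congr_fun hx2 ⟨b, hb⟩)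
  · rw [← Subspace.dualCoannihilator_dualAnnihilator_eq (W := _ ⊔ _),
      ← Submodule.dualAnnihilator_bot]
    congr 1
    rw [eq_bot_iff]
    rintro ⟨b, hb⟩ hbW
    rw [Submodule.mem_dualCoannihilator] at hbW
    refine Subtype.ext (hlev' 1 (e - 1) (by omega) b hb fun x hx => ?_)
    rw [pow_one] at hx
    rw [mul_comm]
    exact hψ _ (hVe ▸ Submodule.mul_mem_mul hx hb)
      (hbW _ (Submodule.mem_sup_left ⟨⟨x, hx⟩, rfl⟩))
      (hbW _ (Submodule.mem_sup_right ⟨⟨x, hx⟩, rfl⟩))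
  · intro t
    have h : mulPairing φ V (V ^ (e - 1)) + t • mulPairing ψ V (V ^ (e - 1)) =
        mulPairing (φ + t • ψ) V (V ^ (e - 1)) := rfl
    rw [h]
    have h2 := hrank φ
    have h3 := hrank (φ + t • ψ)
    have h4 := hφ (φ + t • ψ)
    omega

/-- All the kernels of the pairings `A_i × A_{e-i} → k` defined by `φ` have the same dimension
for `1 ≤ i ≤ e - 1`. -/
theorem finrank_leftKer_pow [FiniteDimensional k V] {r : ℕ} (he : 2 ≤ e)
    (h1 : Module.finrank k V = r) (hpen : Module.finrank k (V ^ (e - 1) : Submodule k A) = r)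
    (hfin : ∀ i, FiniteDimensional k (V ^ i : Submodule k A))
    (hlev : ∀ i < e, ∀ a ∈ V ^ i, (∀ v ∈ V, a * v = 0) → a = 0)
    {φ ψ : A →ₗ[k] k} (hψ : ∀ a ∈ V ^ e, φ a = 0 → ψ a = 0 → a = 0)
    (hφ : Module.finrank k (leftKer φ V (V ^ (e - 1))) ≤ 1) :
    ∀ i, 1 ≤ i → i ≤ e - 1 → Module.finrank k (leftKer φ (V ^ i) (V ^ (e - i))) =
      Module.finrank k (leftKer φ V (V ^ (e - 1))) := by
  have hlev' := eq_zero_of_forall_pow_mul hlev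
  have hVe : V ^ (e - 1) * V = V ^ e := by rw [← pow_succ, Nat.sub_add_cancel (by omega)]
  have hfK : ∀ P Q : Submodule k A, FiniteDimensional k P →
      FiniteDimensional k (leftKer φ P Q) := fun P Q _ =>
    Submodule.finiteDimensional_of_le (leftKer_le φ P Q)
  have hends : Module.finrank k (leftKer φ (V ^ (e - 1)) V) =
      Module.finrank k (leftKer φ V (V ^ (e - 1))) := by
    have := hfin (e - 1)
    have := finrank_add_finrank_leftKer_comm φ V (V ^ (e - 1))
    omega
  have hK1 : leftKer φ (V ^ (e - 1)) (V ^ (e - (e - 1))) = leftKer φ (V ^ (e - 1)) V := by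
    rw [Nat.sub_sub_self (by omega), pow_one]
  have := hfK _ V (hfin (e - 1))
  obtain ⟨⟨a₀, ha₀⟩, hspan⟩ := finrank_le_one_iff.1 (hends.le.trans hφ)
  -- `x * a₀ ∈ A_e ∩ ker φ`, which is a line with coordinate `ψ`: so up to multiples of a suitable
  -- `z`, every linear form kills the spanning vector `a₀` of the degree `e - 1` kernel
  obtain ⟨z, hz, hzx⟩ : ∃ z ∈ V, ∀ x ∈ V, ∃ c : k, (x - c • z) * a₀ = 0 := by
    by_cases h0 : a₀ = 0
    · exact ⟨0, V.zero_mem, fun x _ => ⟨0, by rw [h0, mul_zero]⟩⟩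
    · have hmem : ∀ x ∈ V, x * a₀ ∈ V ^ e ∧ φ (x * a₀) = 0 := fun x hx => by
        rw [mul_comm]
        exact ⟨hVe ▸ Submodule.mul_mem_mul ha₀.1 hx, ha₀.2 x hx⟩
      obtain ⟨z, hz, hz0⟩ : ∃ z ∈ V, ψ (z * a₀) ≠ 0 := by
        by_contra! h
        refine h0 (hlev (e - 1) (by omega) a₀ ha₀.1 fun v hv => ?_)
        rw [mul_comm]
        exact hψ _ (hmem v hv).1 (hmem v hv).2 (h v hv)
      refine ⟨z, hz, fun x hx => ⟨ψ (x * a₀) / ψ (z * a₀), ?_⟩⟩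
      have hx' := hmem _ (V.sub_mem hx (V.smul_mem (ψ (x * a₀) / ψ (z * a₀)) hz))
      refine hψ _ hx'.1 hx'.2 ?_
      rw [sub_mul, smul_mul_assoc, map_sub, map_smul, smul_eq_mul, div_mul_cancel₀ _ hz0, sub_self]
  -- linear forms killing `a₀` also kill the kernels in lower degrees, by levelness
  have hinj : ∀ i, i + 2 ≤ e → ∀ a ∈ leftKer φ (V ^ i) (V ^ (e - i)), a * z = 0 → a = 0 := by
    intro i hi a ha haz
    refine hlev i (by omega) a ha.1 fun x hx => ?_
    obtain ⟨c, hc⟩ := hzx x hx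
    have hax : a * x = a * (x - c • z) := by
      rw [mul_sub, mul_smul_comm, haz, smul_zero, sub_zero]
    refine hlev' (e - 1 - i) (i + 1) (by omega) _
      (by rw [pow_succ]; exact Submodule.mul_mem_mul ha.1 hx) fun b hb => ?_
    have hab := mul_mem_leftKer_pow (j := e - 1 - i) (by omega) ha hb
    rw [show i + (e - 1 - i) = e - 1 by omega, hK1] at hab
    obtain ⟨d, hd⟩ := hspan ⟨_, hab⟩
    have hd' : d • a₀ = a * b := congrArg Subtype.val hd
    calc a * x * b = (x - c • z) * (a * b) := by rw [hax]; ring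
      _ = 0 := by rw [← hd', mul_smul_comm, hc, smul_zero]
  have hmono : ∀ i, i + 2 ≤ e →
      Module.finrank k (leftKer φ (V ^ i) (V ^ (e - i))) ≤
        Module.finrank k (leftKer φ (V ^ (i + 1)) (V ^ (e - (i + 1)))) := by
    intro i hi
    have := hfK _ (V ^ (e - i)) (hfin i)
    have := hfK _ (V ^ (e - (i + 1))) (hfin (i + 1))
    have h := finrank_map_add_finrank_inf_ker (LinearMap.mulRight k z)
      (leftKer φ (V ^ i) (V ^ (e - i)))
    have hbot : leftKer φ (V ^ i) (V ^ (e - i)) ⊓ LinearMap.ker (LinearMap.mulRight k z) = ⊥ := by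
      rw [eq_bot_iff]
      rintro a ⟨ha, haz⟩
      exact hinj i hi a ha haz
    rw [hbot, finrank_bot, add_zero] at h
    rw [← h]
    refine Submodule.finrank_mono ?_
    rintro _ ⟨a, ha, rfl⟩
    exact mul_mem_leftKer_pow (by omega) ha (by rwa [pow_one])
  have hup : ∀ i j, i ≤ j → j + 1 ≤ e →
      Module.finrank k (leftKer φ (V ^ i) (V ^ (e - i))) ≤
        Module.finrank k (leftKer φ (V ^ j) (V ^ (e - j))) := by
    intro i j hij
    induction j, hij using Nat.le_induction with
    | base => exact fun _ => le_rfl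
    | succ j _ ih => exact fun hj => (ih (by omega)).trans (hmono j (by omega))
  intro i hi1 hie
  refine le_antisymm ?_ ?_
  · have := hup i (e - 1) hie (by omega)
    rwa [hK1, hends] at this
  · have := hup 1 i hi1 (by omega)
    rwa [pow_one] at this

end Level

/-! ### The upper bound -/

section Bound

variable {k A : Type*} [Field k] [CommRing A] [Algebra k A] {V : Submodule k A} {e : ℕ}

/-- A line in `V` has a complementary hyperplane, which may be chosen to contain any prescribed
vector `x` of which `w` is not a multiple. -/
theorem exists_hyperplane [FiniteDimensional k V] {w x : A} (hw : w ∈ V) (hx : x ∈ V)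
    (hwx : w ∉ Submodule.span k {x}) :
    ∃ U ≤ V, Module.finrank k U + 1 ≤ Module.finrank k V ∧ x ∈ U ∧
      V ≤ U ⊔ Submodule.span k {w} := by
  obtain ⟨f, hfw, hfx⟩ := Submodule.exists_le_ker_of_notMem hwx
  refine ⟨V ⊓ LinearMap.ker f, inf_le_left, ?_,
    ⟨hx, hfx (Submodule.mem_span_singleton_self x)⟩, fun v hv => ?_⟩
  · rw [← finrank_map_add_finrank_inf_ker f V]
    have hne : Module.finrank k (V.map f) ≠ 0 := by
      rw [Submodule.finrank_eq_zero.ne, Submodule.ne_bot_iff]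
      exact ⟨f w, ⟨w, hw, rfl⟩, hfw⟩
    omega
  · rw [← sub_add_cancel v ((f v / f w) • w)]
    refine Submodule.add_mem_sup ⟨V.sub_mem hv (V.smul_mem _ hw), ?_⟩
      (Submodule.smul_mem _ _ (Submodule.mem_span_singleton_self w))
    simp [hfw]

/-- The bound when the pairing `A_1 × A_{e-1} → k` is degenerate: a linear form `w` in its kernel
multiplies `A_{i-1}` into the kernel in degree `i`, so modulo the latter `A_i` is spanned by the
monomials in a complementary set of linear forms. -/
theorem pow_le_of_leftKer_ne_bot [FiniteDimensional k V] {φ : A →ₗ[k] k}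
    (hK : leftKer φ V (V ^ (e - 1)) ≠ ⊥) :
    ∃ U ≤ V, Module.finrank k U + 1 ≤ Module.finrank k V ∧
      ∀ i ≤ e, V ^ i ≤ U ^ i ⊔ leftKer φ (V ^ i) (V ^ (e - i)) := by
  obtain ⟨w, hw, hw0⟩ := (Submodule.ne_bot_iff _).1 hK
  obtain ⟨U, hUV, hU, -, hVU⟩ := exists_hyperplane (x := 0) hw.1 V.zero_mem (by simpa using hw0)
  refine ⟨U, hUV, hU, fun i => ?_⟩
  induction i with
  | zero => exact fun _ => by simp
  | succ i ih =>
    intro hi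
    have h1 : V ^ (i + 1) ≤ (U ^ i ⊔ leftKer φ (V ^ i) (V ^ (e - i))) * V := by
      rw [pow_succ]
      exact mul_le_mul' (ih (by omega)) le_rfl
    refine h1.trans ?_
    rw [Submodule.sup_mul]
    refine sup_le ?_ ?_
    · refine (mul_le_mul' le_rfl hVU).trans ?_
      rw [Submodule.mul_sup, ← pow_succ]
      refine sup_le_sup_left ?_ _
      rw [Submodule.mul_le]
      intro u hu v hv
      obtain ⟨c, rfl⟩ := Submodule.mem_span_singleton.1 hv
      have hu' : u ∈ V ^ i := pow_le_pow_left' hUV i hu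
      have hw1 : w ∈ leftKer φ (V ^ 1) (V ^ (e - 1)) := by rwa [pow_one]
      have := mul_mem_leftKer_pow (j := i) (by omega) hw1 hu'
      rw [add_comm 1 i] at this
      rw [mul_smul_comm, mul_comm]
      exact Submodule.smul_mem _ _ this
    · refine le_trans ?_ le_sup_right
      rw [Submodule.mul_le]
      intro a ha v hv
      exact mul_mem_leftKer_pow hi ha (by rwa [pow_one])

/-- If the `2 × 2` minors of the matrix with rows `x`, `M x` vanish, with `M x₁` not a multiple of
`x₁`, then `A_i` is spanned by the monomials avoiding `M x₁` and one further monomial. -/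
theorem pow_le_of_mul_comm [FiniteDimensional k V] (M : V → V)
    (hM : ∀ x y : V, (x : A) * M y = y * M x) (x₁ : V)
    (hx₁ : (M x₁ : A) ∉ Submodule.span k {(x₁ : A)}) :
    ∃ U ≤ V, Module.finrank k U + 1 ≤ Module.finrank k V ∧
      ∀ i, V ^ (i + 1) ≤ U ^ (i + 1) ⊔ Submodule.span k {(M x₁ : A) * (x₁ : A) ^ i} := by
  obtain ⟨U, hUV, hU, hxU, hVU⟩ := exists_hyperplane (M x₁).2 x₁.2 hx₁
  refine ⟨U, hUV, hU, fun i => ?_⟩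
  induction i with
  | zero => simpa using hVU
  | succ i ih =>
    -- a factor `M x₁` next to a linear form `v` can be traded for `x₁ ∈ U`: `v * M x₁ = x₁ * M v`
    have h1 : V ^ (i + 1 + 1) ≤ V ^ (i + 1) * U := by
      rw [pow_succ]
      refine (mul_le_mul' le_rfl hVU).trans ?_
      rw [Submodule.mul_sup]
      refine sup_le le_rfl ?_
      rw [pow_succ, Submodule.mul_le]
      intro a ha m hm
      obtain ⟨c, rfl⟩ := Submodule.mem_span_singleton.1 hm
      rw [mul_smul_comm]
      refine Submodule.smul_mem _ _ ?_
      induction ha using Submodule.mul_induction_on' with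
      | mem_mul_mem a ha v hv =>
        have h : a * v * (M x₁ : A) = a * (M ⟨v, hv⟩ : A) * x₁ := by
          rw [mul_assoc, hM ⟨v, hv⟩ x₁]; ring
        rw [h]
        exact Submodule.mul_mem_mul (Submodule.mul_mem_mul ha (M _).2) hxU
      | add a _ b _ ha hb => rw [add_mul]; exact Submodule.add_mem _ ha hb
    refine h1.trans ((mul_le_mul' ih le_rfl).trans ?_)
    rw [Submodule.sup_mul, ← pow_succ]
    refine sup_le le_sup_left ?_
    rw [Submodule.mul_le]
    intro a ha u hu
    obtain ⟨c, rfl⟩ := Submodule.mem_span_singleton.1 ha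
    rw [smul_mul_assoc]
    refine Submodule.smul_mem _ _ ?_
    have h : (M x₁ : A) * (x₁ : A) ^ i * u = (x₁ : A) ^ (i + 1) * M ⟨u, hUV hu⟩ := by
      have := hM ⟨u, hUV hu⟩ x₁
      calc _ = (x₁ : A) ^ i * (u * M x₁) := by ring
        _ = _ := by rw [this]; ring
    rw [h]
    obtain ⟨u', hu', m, hm, hum⟩ := Submodule.mem_sup.1 (hVU (M ⟨u, hUV hu⟩).2)
    obtain ⟨d, rfl⟩ := Submodule.mem_span_singleton.1 hm
    rw [← hum, mul_add, mul_smul_comm, mul_comm _ (M x₁ : A)]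
    refine Submodule.add_mem_sup ?_
      (Submodule.smul_mem _ _ (Submodule.mem_span_singleton_self _))
    rw [pow_succ]
    exact Submodule.mul_mem_mul (Submodule.pow_mem_pow _ hxU _) hu'

/-- When the pairing `A_1 × A_{e-1} → k` given by `φ` is perfect, `ψ` is described by an
endomorphism `M` of `A_1`, which is not a homothety, and commutativity forces the `2 × 2` minors
of the matrix with rows `x`, `M x` to vanish. -/
theorem exists_mul_comm [FiniteDimensional k V] {r : ℕ} (he : 2 ≤ e)
    (h1 : Module.finrank k V = r) (hpen : Module.finrank k (V ^ (e - 1) : Submodule k A) = r)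
    (hfin : ∀ i, FiniteDimensional k (V ^ i : Submodule k A))
    (he2 : Module.finrank k (V ^ e : Submodule k A) = 2)
    {φ ψ : A →ₗ[k] k} (hψ : ∀ a ∈ V ^ e, φ a = 0 → ψ a = 0 → a = 0)
    (hK : leftKer φ V (V ^ (e - 1)) = ⊥)
    (hK2 : leftKer φ (V ^ 2) (V ^ (e - 2)) = ⊥) :
    ∃ M : V → V, (∀ x y : V, (x : A) * M y = y * M x) ∧
      ∃ x₁ : V, (M x₁ : A) ∉ Submodule.span k {(x₁ : A)} := by
  have := hfin (e - 1)
  have hr := finrank_range_add_finrank_leftKer φ V (V ^ (e - 1))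
  have hdim : Module.finrank k V = Module.finrank k (Module.Dual k (V ^ (e - 1) : Submodule k A)) :=
    by rw [Subspace.dual_finrank_eq, hpen, h1]
  have hsurj : Function.Surjective (mulPairing φ V (V ^ (e - 1))) := by
    rw [← LinearMap.range_eq_top]
    refine Submodule.eq_top_of_finrank_eq ?_
    rw [hK, finrank_bot] at hr
    omega
  have hinj := (LinearMap.injective_iff_surjective_of_finrank_eq_finrank hdim).2 hsurj
  let E := LinearEquiv.ofBijective _ ⟨hinj, hsurj⟩
  let M : V →ₗ[k] V := E.symm.toLinearMap ∘ₗ mulPairing ψ V (V ^ (e - 1))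
  have hMφ : ∀ x : V, ∀ b ∈ V ^ (e - 1), φ (M x * b) = ψ (x * b) := by
    intro x b hb
    exact LinearMap.congr_fun (E.apply_symm_apply (mulPairing ψ V (V ^ (e - 1)) x)) ⟨b, hb⟩
  refine ⟨M, fun x y => ?_, ?_⟩
  · rw [← sub_eq_zero, ← Submodule.mem_bot k, ← hK2]
    have hV2 : ∀ a ∈ V, ∀ b ∈ V, a * b ∈ V ^ 2 := fun a ha b hb => by
      rw [pow_two]; exact Submodule.mul_mem_mul ha hb
    refine ⟨Submodule.sub_mem _ (hV2 _ x.2 _ (M y).2) (hV2 _ y.2 _ (M x).2), fun b hb => ?_⟩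
    have hVb : ∀ a ∈ V, a * b ∈ V ^ (e - 1) := fun a ha => by
      rw [show e - 1 = e - 2 + 1 by omega, pow_succ']
      exact Submodule.mul_mem_mul ha hb
    have e1 : (x : A) * M y * b = M y * (x * b) := by ring
    have e2 : (y : A) * M x * b = M x * (y * b) := by ring
    rw [sub_mul, map_sub, e1, e2, hMφ y _ (hVb x x.2), hMφ x _ (hVb y y.2), sub_eq_zero]
    congr 1
    ring
  · by_contra! h
    -- otherwise `M` is a homothety `c`, so `ψ = c φ` on `A_e`, which is two-dimensional
    obtain ⟨c, hc⟩ := M.exists_eq_smul_id_of_forall_notLinearIndependent fun v hv => by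
      obtain ⟨c, hc⟩ := Submodule.mem_span_singleton.1 (h v)
      rw [LinearIndependent.pair_iff] at hv
      have := hv c (-1) (by rw [neg_one_smul, add_neg_eq_zero]; exact Subtype.ext hc)
      exact one_ne_zero (neg_eq_zero.1 this.2)
    have hker : V ^ e ≤ LinearMap.ker (ψ - c • φ) := by
      rw [show e = e - 1 + 1 by omega, pow_succ', Submodule.mul_le]
      intro x hx b hb
      have := hMφ ⟨x, hx⟩ b hb
      rw [hc] at this
      simpa [sub_eq_zero] using this.symm
    have hd := finrank_map_add_finrank_inf_ker φ (V ^ e)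
    have hle := Submodule.finrank_le ((V ^ e).map φ)
    rw [Module.finrank_self] at hle
    have hbot : V ^ e ⊓ LinearMap.ker φ = ⊥ := by
      rw [eq_bot_iff]
      rintro a ⟨ha, ha0⟩
      have ha0' : φ a = 0 := ha0
      have ha1 := hker ha
      simp [ha0'] at ha1
      exact hψ a ha ha0' ha1
    rw [hbot, finrank_bot] at hd
    omega

end Bound

/-- The result in coordinate-free form: `V` plays the role of `A_1` and `V ^ i` that of `A_i`. -/
theorem finrank_pow_symm_and_le {k A : Type*} [Field k] [Infinite k] [CommRing A] [Algebra k A]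
    {V : Submodule k A} {e r : ℕ} (he : 3 ≤ e) (hr2 : 2 ≤ r) (hr5 : r ≤ 5)
    (h1 : Module.finrank k V = r) (hpen : Module.finrank k (V ^ (e - 1) : Submodule k A) = r)
    (he2 : Module.finrank k (V ^ e : Submodule k A) = 2)
    (hlev : ∀ i < e, ∀ a ∈ V ^ i, (∀ v ∈ V, a * v = 0) → a = 0)
    (i : ℕ) (hi1 : 1 ≤ i) (hie : i + 1 ≤ e) :
    Module.finrank k (V ^ (e - i) : Submodule k A) = Module.finrank k (V ^ i : Submodule k A) ∧
      Module.finrank k (V ^ i : Submodule k A) ≤ (r - 2 + i).choose i + 1 := by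
  have hfV : FiniteDimensional k V := Module.finite_of_finrank_pos (by omega)
  have hfin : ∀ i, FiniteDimensional k (V ^ i : Submodule k A) := fun i =>
    Module.Finite.iff_fg.2 ((Module.Finite.iff_fg.1 hfV).pow i)
  obtain ⟨φ, ψ, hψ, hφ⟩ := exists_functionals (by omega) hr2 hr5 h1 hpen he2 hlev
  have hK := finrank_leftKer_pow (by omega) h1 hpen hfin hlev hψ hφ
  refine ⟨?_, ?_⟩
  · have h2 := finrank_add_finrank_leftKer_comm φ (V ^ i) (V ^ (e - i))
    have h3 := hK i hi1 (by omega)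
    have h4 := hK (e - i) (by omega) (by omega)
    rw [Nat.sub_sub_self (by omega)] at h4
    omega
  · obtain ⟨U, L, hUV, hU, hL, hLf, hle⟩ : ∃ U L : Submodule k A, U ≤ V ∧
        Module.finrank k U + 1 ≤ Module.finrank k V ∧ Module.finrank k L ≤ 1 ∧
        FiniteDimensional k L ∧ V ^ i ≤ U ^ i ⊔ L := by
      by_cases hbot : leftKer φ V (V ^ (e - 1)) = ⊥
      · have hK2 : leftKer φ (V ^ 2) (V ^ (e - 2)) = ⊥ := by
          have : FiniteDimensional k (leftKer φ (V ^ 2) (V ^ (e - 2))) :=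
            Submodule.finiteDimensional_of_le (leftKer_le _ _ _)
          rw [← Submodule.finrank_eq_zero (R := k), hK 2 (by omega) (by omega), hbot, finrank_bot]
        obtain ⟨M, hM, x₁, hx₁⟩ := exists_mul_comm (by omega) h1 hpen hfin he2 hψ hbot hK2
        obtain ⟨U, hUV, hU, hle⟩ := pow_le_of_mul_comm M hM x₁ hx₁
        obtain ⟨j, rfl⟩ : ∃ j, i = j + 1 := ⟨i - 1, by omega⟩
        refine ⟨U, _, hUV, hU, ?_, inferInstance, hle j⟩
        rw [← Finset.coe_singleton]
        exact finrank_span_finset_le_card _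
      · obtain ⟨U, hUV, hU, hle⟩ := pow_le_of_leftKer_ne_bot hbot
        exact ⟨U, _, hUV, hU, (hK i hi1 (by omega)).trans_le hφ,
          Submodule.finiteDimensional_of_le (leftKer_le _ _ _), hle i (by omega)⟩
    have hfU : FiniteDimensional k U := Submodule.finiteDimensional_of_le hUV
    have hfUi : FiniteDimensional k (U ^ i : Submodule k A) :=
      Module.Finite.iff_fg.2 ((Module.Finite.iff_fg.1 hfU).pow i)
    have h2 := Submodule.finrank_mono hle
    have h3 := Submodule.finrank_add_le_finrank_add_finrank (U ^ i) L
    have h4 := finrank_pow_le U i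
    have h5 : (Module.finrank k U + i - 1).choose i ≤ (r - 2 + i).choose i :=
      Nat.choose_le_choose i (by omega)
    omega

/-! ### Passage to the quotient of the polynomial ring -/

open MvPolynomial

/-- The graded pieces of the quotient are the powers of its degree one piece. -/
theorem quotPiece_eq_pow (k : Type) [Field k] (r : ℕ) (I : Ideal (MvPolynomial (Fin r) k))
    (d : ℕ) : quotPiece k r I d = quotPiece k r I 1 ^ d := by
  rw [quotPiece, quotPiece, ← homogeneousSubmodule_one_pow, Submodule.map_pow]

/-- For a homogeneous ideal, distinct graded pieces of the quotient meet trivially. -/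
theorem eq_zero_of_mem_quotPiece_of_ne {k : Type} [Field k] {r : ℕ}
    {I : Ideal (MvPolynomial (Fin r) k)} (hI : ∀ f ∈ I, ∀ d, homogeneousComponent d f ∈ I)
    {i j : ℕ} (hij : i ≠ j) {a : MvPolynomial (Fin r) k ⧸ I} (hi : a ∈ quotPiece k r I i)
    (hj : a ∈ quotPiece k r I j) : a = 0 := by
  obtain ⟨p, hp, rfl⟩ := hi
  obtain ⟨q, hq, hqp⟩ := hj
  have hqp' : Ideal.Quotient.mk I q = Ideal.Quotient.mk I p := hqp
  have h := hI _ (Ideal.Quotient.eq.1 hqp') i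
  rw [map_sub, homogeneousComponent_of_mem hq, homogeneousComponent_of_mem hp, if_neg hij,
    if_pos rfl, zero_sub, neg_mem_iff] at h
  exact Ideal.Quotient.eq_zero_iff_mem.2 h

/-- Theorem 3.8 i), upper bound: for `2 ≤ r ≤ 5` and a level algebra of type 2, codimension
`r` and socle degree `e` with `h_{e-1} = r`, one has, for every `2 ≤ i ≤ e-2`,
`h_{e-i} = h_i` and `h_{e-i} ≤ min (C(r-2+i, i) + 1) (C(r-2+e-i, e-i) + 1)`. -/
theorem stmt10 (k : Type) [Field k] [CharZero k] (r e : ℕ) (hr2 : 2 ≤ r) (hr5 : r ≤ 5)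
    (I : Ideal (MvPolynomial (Fin r) k))
    (hI : IsLevelQuot k r e 2 I) (hcodim : hilb k r I 1 = r)
    (hpen : hilb k r I (e - 1) = r) :
    ∀ i, 2 ≤ i → i ≤ e - 2 →
      hilb k r I (e - i) = hilb k r I i ∧
      hilb k r I (e - i) ≤
        min ((r - 2 + i).choose i + 1) ((r - 2 + (e - i)).choose (e - i) + 1) := by
  intro i hi hie
  have hp := quotPiece_eq_pow k r I
  obtain ⟨hhom, -, he2, hsoc⟩ := hI
  have hlev : ∀ j < e, ∀ a ∈ quotPiece k r I 1 ^ j, (∀ v ∈ quotPiece k r I 1, a * v = 0) →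
      a = 0 := by
    intro j hj a ha h
    rw [← hp] at ha
    refine eq_zero_of_mem_quotPiece_of_ne hhom hj.ne ha ?_
    rw [← SetLike.mem_coe, ← hsoc]
    exact fun l => h _ ⟨X l, isHomogeneous_X k l, rfl⟩
  have hd : ∀ d, hilb k r I d = Module.finrank k (quotPiece k r I 1 ^ d :
      Submodule k (MvPolynomial (Fin r) k ⧸ I)) := fun d => by rw [hilb, hp d]
  have key := finrank_pow_symm_and_le (by omega) hr2 hr5 hcodim ((hd _).symm.trans hpen)
    ((hd _).symm.trans he2) hlev
  simp only [← hd] at key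
  have h1 := key i (by omega) (by omega)
  have h2 := key (e - i) (by omega) (by omega)
  exact ⟨h1.1, le_min (h1.1.le.trans h1.2) h2.2⟩
end

section
/- For all integers r, e, i, v with 2 ≤ r ≤ 5, e ≥ 4, 2 ≤ i ≤ e−2 and r ≤ v ≤ min{ C(r−2+i, i) + 1, C(r−2+e−i, e−i) + 1 }, there exists a level standard graded artinian algebra of type 2, codimension r and socle degree e over k whose h-vector (1, r, h_2, …, h_{e-1}, 2) satisfies h_{e-1} = r and h_{e−i} = v. -/
/-!
The algebra is built from a finite set `S` of `v` points by Macaulay duality. For a family of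
functionals `L t` on the forms of degree `e`, the polynomials `f` such that `L t` kills the
degree-`e` component of every multiple of `f` form a homogeneous ideal (`pairingIdeal`), and the
quotient is always level of socle degree `e`, of type the dimension of the span of the `L t`
(`pairingIdeal_socle`).

Here `L 1` is the evaluation at a coordinate point `q`, and `L 0` is the sum of the evaluations at
the remaining `v - 1` points, which lie on the opposite coordinate hyperplane and include the other
coordinate points. In terms of inverse systems these are a sum of `v - 1` powers of linear forms
in `r - 1` variables and a power of the remaining variable. If forms of degree `d` and of degree `e - d`
both interpolate arbitrary values on `S`, then a form of degree `d` is in the ideal exactly when it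
vanishes on `S`, so `h_d = v` (`hilb_of_le`). In degree `1` vanishing on `S` means being zero,
because `S` spans, and in degree `e - 1` the condition on `f` is the vector equation
`∑_{a ∈ S} f(a) a = 0`; both give the value `r` (`hilb_one`, `hilb_pred`).

With `m = min i (e - i)`, the points are taken among the lattice points with nonnegative coordinates
of sum `m`. Products of linear forms separate all these points in degree `m`, hence in every larger
degree (`exists_interp`), and the coordinate hyperplane contains `C(r - 2 + m, m)` of them, which
is where the upper bound on `v` enters (`exists_points`).
-/


open MvPolynomial

/-! ### The ideal of a family of functionals on forms of degree `e` -/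

/-- A form of degree `d ≤ e` times an arbitrary polynomial: the degree-`e` component. -/
lemma comp_mul {k : Type} [Field k] {r d e : ℕ} {f : MvPolynomial (Fin r) k}
    (hf : f.IsHomogeneous d) (hd : d ≤ e) (g : MvPolynomial (Fin r) k) :
    homogeneousComponent e (f * g) = f * homogeneousComponent (e - d) g := by
  conv_lhs => rw [← sum_homogeneousComponent g, Finset.mul_sum, map_sum]
  have h1 : ∀ j, homogeneousComponent e (f * homogeneousComponent j g) =
      if e - d = j then f * homogeneousComponent (e - d) g else 0 := by
    intro j
    rw [homogeneousComponent_of_mem (hf.mul (homogeneousComponent_isHomogeneous j g))]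
    by_cases h : e - d = j
    · subst h
      rw [if_pos (by omega), if_pos rfl]
    · rw [if_neg (by omega), if_neg h]
  simp_rw [h1]
  rw [Finset.sum_ite_eq]
  split_ifs with h
  · rfl
  · rw [homogeneousComponent_eq_zero (e - d) g (by
      rw [Finset.mem_range] at h; omega), mul_zero]

lemma comp_mul_of_lt {k : Type} [Field k] {r d e : ℕ} {f : MvPolynomial (Fin r) k}
    (hf : f.IsHomogeneous d) (hd : e < d) (g : MvPolynomial (Fin r) k) :
    homogeneousComponent e (f * g) = 0 := by
  conv_lhs => rw [← sum_homogeneousComponent g, Finset.mul_sum, map_sum]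
  refine Finset.sum_eq_zero fun j _ => ?_
  rw [homogeneousComponent_of_mem (hf.mul (homogeneousComponent_isHomogeneous j g)),
    if_neg (by omega)]

/-- The largest homogeneous ideal whose degree-`e` part is killed by all the functionals `L t`:
the ideal apolar to the inverse system generated by the `L t`, seen as functionals on the forms
of degree `e`. -/
def pairingIdeal {k : Type} [Field k] {r : ℕ} {τ : Type} (e : ℕ)
    (L : τ → MvPolynomial (Fin r) k →ₗ[k] k) : Ideal (MvPolynomial (Fin r) k) where
  carrier := {f | ∀ t g, L t (homogeneousComponent e (f * g)) = 0}
  add_mem' := by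
    intro a b ha hb t g
    rw [add_mul, map_add, map_add, ha, hb, add_zero]
  zero_mem' := by
    intro t g
    simp
  smul_mem' := by
    intro c f hf t g
    have := hf t (c * g)
    rwa [smul_eq_mul, mul_assoc, mul_left_comm]

section
variable {k : Type} [Field k] {r : ℕ} {τ : Type} {e : ℕ}
  {L : τ → MvPolynomial (Fin r) k →ₗ[k] k}

lemma mem_pairingIdeal {f : MvPolynomial (Fin r) k} :
    f ∈ pairingIdeal e L ↔ ∀ t g, L t (homogeneousComponent e (f * g)) = 0 := Iff.rfl

lemma mem_pairingIdeal_of_hom {d : ℕ} {f : MvPolynomial (Fin r) k} (hf : f.IsHomogeneous d)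
    (hd : d ≤ e) : f ∈ pairingIdeal e L ↔
      ∀ t, ∀ g : MvPolynomial (Fin r) k, g.IsHomogeneous (e - d) → L t (f * g) = 0 := by
  rw [mem_pairingIdeal]
  constructor
  · intro h t g hg
    have := h t g
    rwa [comp_mul hf hd, homogeneousComponent_eq_self hg] at this
  · intro h t g
    rw [comp_mul hf hd]
    exact h t _ (homogeneousComponent_isHomogeneous _ _)

lemma pairingIdeal_hom {f : MvPolynomial (Fin r) k} (hf : f ∈ pairingIdeal e L) (d : ℕ) :
    homogeneousComponent d f ∈ pairingIdeal e L := by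
  rcases lt_or_ge e d with hd | hd
  · intro t g
    rw [comp_mul_of_lt (homogeneousComponent_isHomogeneous d f) hd, map_zero]
  · rw [mem_pairingIdeal_of_hom (homogeneousComponent_isHomogeneous d f) hd]
    intro t g hg
    have := hf t g
    rw [mul_comm, comp_mul hg (by omega), mul_comm, show e - (e - d) = d by omega] at this
    exact this

lemma mem_pairingIdeal_of_lt {d : ℕ} {f : MvPolynomial (Fin r) k} (hf : f.IsHomogeneous d)
    (hd : e < d) : f ∈ pairingIdeal e L := by
  intro t g
  rw [comp_mul_of_lt hf hd, map_zero]

/-- If every `X i * f` lies in the ideal, then so does `f` minus its degree-`e` component: against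
a polynomial without constant term `f` pairs to zero, and against a constant only its degree-`e`
component matters. -/
lemma sub_comp_mem {f : MvPolynomial (Fin r) k} (hf : ∀ i, f * X i ∈ pairingIdeal e L) :
    f - homogeneousComponent e f ∈ pairingIdeal e L := by
  intro t g
  induction g using MvPolynomial.induction_on with
  | C a =>
    rw [mul_comm, comp_mul (isHomogeneous_C (Fin r) a) (Nat.zero_le e), Nat.sub_zero, map_sub,
      homogeneousComponent_eq_self (homogeneousComponent_isHomogeneous e f), sub_self, mul_zero,
      map_zero]
  | add p q hp hq => rw [mul_add, map_add, map_add, hp, hq, add_zero]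
  | mul_X p i _ =>
    have h1 := hf i t p
    have h2 : homogeneousComponent e (homogeneousComponent e f * X i * p) = 0 :=
      comp_mul_of_lt ((homogeneousComponent_isHomogeneous e f).mul (isHomogeneous_X k i))
        (Nat.lt_succ_self e) p
    rw [show (f - homogeneousComponent e f) * (p * X i) =
      f * X i * p - homogeneousComponent e f * X i * p by ring, map_sub, h2, sub_zero, h1]

lemma pairingIdeal_socle :
    {a : MvPolynomial (Fin r) k ⧸ pairingIdeal e L |
        ∀ i, a * Ideal.Quotient.mk (pairingIdeal e L) (X i) = 0} =
      (quotPiece k r (pairingIdeal e L) e : Set (MvPolynomial (Fin r) k ⧸ pairingIdeal e L)) := by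
  ext a
  obtain ⟨f, rfl⟩ := Ideal.Quotient.mk_surjective a
  simp only [Set.mem_ofPred_eq, ← map_mul, Ideal.Quotient.eq_zero_iff_mem, SetLike.mem_coe]
  constructor
  · intro h
    refine ⟨homogeneousComponent e f, homogeneousComponent_isHomogeneous e f, ?_⟩
    exact (Ideal.Quotient.eq.2 (sub_comp_mem h)).symm
  · rintro ⟨f', hf', h⟩ i
    have h1 : f' - f ∈ pairingIdeal e L := Ideal.Quotient.eq.1 h
    have h2 : f' * X i ∈ pairingIdeal e L :=
      mem_pairingIdeal_of_lt (IsHomogeneous.mul hf' (isHomogeneous_X k i)) (Nat.lt_succ_self e)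
    have h3 := (pairingIdeal e L).sub_mem h2 ((pairingIdeal e L).mul_mem_right (X i) h1)
    rwa [show f' * X i - (f' - f) * X i = f * X i by ring] at h3

end

/-- The Hilbert function in degree `d` is the dimension of any space that the forms of degree `d`
surject onto with kernel the degree-`d` part of the ideal. -/
lemma hilb_eq {k : Type} [Field k] {r : ℕ} {I : Ideal (MvPolynomial (Fin r) k)} {d : ℕ}
    {V : Type} [AddCommGroup V] [Module k V] (T : MvPolynomial (Fin r) k →ₗ[k] V)
    (hker : ∀ f : MvPolynomial (Fin r) k, f.IsHomogeneous d → (f ∈ I ↔ T f = 0))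
    (hsurj : ∀ v, ∃ f : MvPolynomial (Fin r) k, f.IsHomogeneous d ∧ T f = v) :
    hilb k r I d = Module.finrank k V := by
  set H := homogeneousSubmodule (Fin r) k d
  set π := (Ideal.Quotient.mkₐ k I).toLinearMap
  have e1 : (LinearMap.range (π.domRestrict H)) = quotPiece k r I d := by
    rw [LinearMap.range_domRestrict]; rfl
  have e2 : LinearMap.range (T.domRestrict H) = ⊤ := by
    rw [LinearMap.range_eq_top]
    intro v
    obtain ⟨f, hf, h⟩ := hsurj v
    exact ⟨⟨f, hf⟩, h⟩
  have e3 : LinearMap.ker (π.domRestrict H) = LinearMap.ker (T.domRestrict H) := by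
    ext ⟨f, hf⟩
    rw [LinearMap.mem_ker, LinearMap.mem_ker]
    exact Ideal.Quotient.eq_zero_iff_mem.trans (hker f hf)
  rw [hilb, ← e1]
  have e4 := ((π.domRestrict H).quotKerEquivRange).symm.trans
    ((Submodule.quotEquivOfEq _ _ e3).trans (T.domRestrict H).quotKerEquivRange)
  rw [e4.finrank_eq, e2, finrank_top]

/-! ### Forms and the lattice points of a simplex -/

/-- The lattice point `a` as a point of affine space over `k`. -/
def latPt (k : Type) [Field k] {r : ℕ} (a : Fin r →₀ ℕ) : Fin r → k := fun l => (a l : k)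

/-- The form `∏_l ∏_{s < a_l} (X_l - (s / m) (X_1 + ⋯ + X_r))`. On lattice points `b` of coordinate
sum `m` it takes the value `∏_l ∏_{s < a_l} (b_l - s)`. -/
noncomputable def latForm (k : Type) [Field k] {r : ℕ} (m : ℕ) (a : Fin r →₀ ℕ) :
    MvPolynomial (Fin r) k :=
  ∏ l, ∏ s ∈ Finset.range (a l), (X l - C ((s : k) / m) * ∑ j, X j)

section
variable {k : Type} [Field k] {r m : ℕ}

lemma latForm_hom (a : Fin r →₀ ℕ) (ha : ∑ l, a l = m) :
    (latForm k m a).IsHomogeneous m := by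
  rw [← ha]
  refine IsHomogeneous.prod _ _ _ fun l _ => ?_
  have h := IsHomogeneous.prod (Finset.range (a l))
    (fun s : ℕ => (X l - C ((s : k) / (∑ l, a l : ℕ)) * ∑ j, X j : MvPolynomial (Fin r) k))
    (fun _ => 1) fun s _ => (isHomogeneous_X k l).sub
      ((IsHomogeneous.sum _ _ 1 fun j _ => isHomogeneous_X k j).C_mul _)
  simpa using h

variable [CharZero k]

lemma eval_latForm (hm : m ≠ 0) (a b : Fin r →₀ ℕ) (hb : ∑ l, b l = m) :
    eval (latPt k b) (latForm k m a) = ∏ l, ∏ s ∈ Finset.range (a l), ((b l : k) - s) := by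
  have hm' : (m : k) ≠ 0 := Nat.cast_ne_zero.2 hm
  have h : ∑ j, (b j : k) = m := by rw [← hb]; push_cast; rfl
  simp only [latForm, map_prod, map_sub, map_mul, map_sum, eval_X, eval_C, latPt, h]
  refine Finset.prod_congr rfl fun l _ => Finset.prod_congr rfl fun s _ => ?_
  rw [div_mul_cancel₀ _ hm']

lemma eval_latForm_ne (hm : m ≠ 0) (a b : Fin r →₀ ℕ) (ha : ∑ l, a l = m) (hb : ∑ l, b l = m)
    (hab : b ≠ a) : eval (latPt k b) (latForm k m a) = 0 := by
  rw [eval_latForm hm a b hb]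
  -- Equal coordinate sums and `b ≠ a` force `b l < a l` for some `l`, so a factor vanishes.
  obtain ⟨l, hl⟩ : ∃ l, b l < a l := by
    by_contra! h
    apply hab
    have := (Finset.sum_eq_sum_iff_of_le (s := Finset.univ) (fun l _ => h l)).1 (ha.trans hb.symm)
    ext l
    exact (this l (Finset.mem_univ l)).symm
  refine Finset.prod_eq_zero (Finset.mem_univ l) ?_
  exact Finset.prod_eq_zero (Finset.mem_range.2 hl) (sub_self _)

lemma eval_latForm_self (hm : m ≠ 0) (a : Fin r →₀ ℕ) (ha : ∑ l, a l = m) :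
    eval (latPt k a) (latForm k m a) ≠ 0 := by
  rw [eval_latForm hm a a ha]
  refine Finset.prod_ne_zero_iff.2 fun l _ => Finset.prod_ne_zero_iff.2 fun s hs => ?_
  rw [sub_ne_zero]
  exact fun h => (Finset.mem_range.1 hs).ne' (Nat.cast_injective h)

/-- Forms of degree `d ≥ m` interpolate arbitrary values at the lattice points of coordinate sum
`m`. A power of `X_1 + ⋯ + X_r`, which equals `m ≠ 0` at each of these points, raises the degree
of the interpolating form from `m` to `d`. -/
lemma exists_interp (hm : m ≠ 0) {d : ℕ} (hd : m ≤ d) (S : Finset (Fin r →₀ ℕ))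
    (hS : ∀ a ∈ S, ∑ l, a l = m) (c : (Fin r →₀ ℕ) → k) :
    ∃ f : MvPolynomial (Fin r) k, f.IsHomogeneous d ∧
      ∀ a ∈ S, eval (latPt k a) f = c a := by
  have hm' : (m : k) ≠ 0 := Nat.cast_ne_zero.2 hm
  refine ⟨(∑ a ∈ S, C (c a / eval (latPt k a) (latForm k m a) / (m : k) ^ (d - m)) *
    latForm k m a) * (∑ j, X j) ^ (d - m), ?_, ?_⟩
  · have h1 : (∑ j, X j : MvPolynomial (Fin r) k).IsHomogeneous 1 :=
      IsHomogeneous.sum _ _ 1 fun j _ => isHomogeneous_X k j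
    have h2 := (IsHomogeneous.sum S (fun a =>
      C (c a / eval (latPt k a) (latForm k m a) / (m : k) ^ (d - m)) * latForm k m a) m
      fun a ha => (latForm_hom a (hS a ha)).C_mul _).mul (h1.pow (d - m))
    rwa [one_mul, Nat.add_sub_cancel' hd] at h2
  · intro b hb
    have h : ∑ j, (b j : k) = m := by rw [← hS b hb]; push_cast; rfl
    rw [map_mul, map_sum, Finset.sum_eq_single b]
    · simp only [map_mul, map_pow, map_sum, eval_X, eval_C]
      simp only [latPt, h]
      have := eval_latForm_self (k := k) hm b (hS b hb)
      field_simp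
    · intro a ha hab
      rw [map_mul, eval_latForm_ne hm a b (hS a ha) (hS b hb) hab.symm, mul_zero]
    · exact fun h => absurd hb h

end

/-! ### The algebra of a point configuration -/

/-- The functionals of the two summands of the inverse system: `ptFun k S q 1` is evaluation at
the point `q`, and `ptFun k S q 0` is the sum of the evaluations at the other points of `S`. -/
noncomputable def ptFun (k : Type) [Field k] {r : ℕ} (S : Finset (Fin r →₀ ℕ))
    (q : Fin r →₀ ℕ) (t : Fin 2) : MvPolynomial (Fin r) k →ₗ[k] k :=
  ∑ a ∈ S, (if t = 1 ↔ a = q then (1 : k) else 0) • (aeval (latPt k a)).toLinearMap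

lemma ptFun_apply {k : Type} [Field k] {r : ℕ} (S : Finset (Fin r →₀ ℕ))
    (q : Fin r →₀ ℕ) (t : Fin 2) (f : MvPolynomial (Fin r) k) :
    ptFun k S q t f = ∑ a ∈ S, if t = 1 ↔ a = q then eval (latPt k a) f else 0 := by
  rw [ptFun, LinearMap.sum_apply]
  refine Finset.sum_congr rfl fun a _ => ?_
  rw [LinearMap.smul_apply, AlgHom.toLinearMap_apply, aeval_eq_eval]
  split_ifs <;> simp

section
variable {k : Type} [Field k] [CharZero k] {r m e : ℕ} {S : Finset (Fin r →₀ ℕ)} {z : Fin r}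

/-- A form vanishing at all points of `S` is in the ideal; the converse holds because forms of the
complementary degree `e - d ≥ m` include indicators of the points. -/
lemma mem_iff_vanish (hm : m ≠ 0) (hS : ∀ a ∈ S, ∑ l, a l = m) (q : Fin r →₀ ℕ) {d : ℕ}
    (hd : d ≤ e) (hde : m ≤ e - d) {f : MvPolynomial (Fin r) k} (hf : f.IsHomogeneous d) :
    f ∈ pairingIdeal e (ptFun k S q) ↔ ∀ a ∈ S, eval (latPt k a) f = 0 := by
  rw [mem_pairingIdeal_of_hom hf hd]
  constructor
  · intro h b hb
    obtain ⟨g, hg, hgv⟩ := exists_interp (k := k) hm hde S hS (fun a => if a = b then 1 else 0)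
    have h1 := h (if b = q then 1 else 0) g hg
    rw [ptFun_apply, Finset.sum_eq_single b] at h1
    · rw [if_pos (by by_cases hq : b = q <;> simp [hq]), map_mul, hgv b hb, if_pos rfl,
        mul_one] at h1
      exact h1
    · intro a ha hab
      rw [map_mul, hgv a ha, if_neg hab, mul_zero, ite_self]
    · exact fun h => absurd hb h
  · intro h t g _
    rw [ptFun_apply]
    refine Finset.sum_eq_zero fun a ha => ?_
    rw [map_mul, h a ha, zero_mul, ite_self]

lemma hilb_of_le (hm : m ≠ 0) (hS : ∀ a ∈ S, ∑ l, a l = m) (q : Fin r →₀ ℕ) {d : ℕ}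
    (hd : d ≤ e) (hde : m ≤ e - d) (hmd : m ≤ d) :
    hilb k r (pairingIdeal e (ptFun k S q)) d = S.card := by
  rw [hilb_eq (V := S → k) (LinearMap.pi fun a : S => (aeval (latPt k a.1)).toLinearMap)]
  · simp
  · intro f hf
    rw [mem_iff_vanish hm hS q hd hde hf, funext_iff]
    simp [aeval_eq_eval]
  · intro v
    classical
    obtain ⟨f, hf, hv⟩ := exists_interp (k := k) hm hmd S hS
      (fun a => if h : a ∈ S then v ⟨a, h⟩ else 0)
    refine ⟨f, hf, ?_⟩
    ext ⟨a, ha⟩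
    simpa [aeval_eq_eval, ha] using hv a ha

lemma hilb_one_s11 (hm : m ≠ 0) (hS : ∀ a ∈ S, ∑ l, a l = m) (q : Fin r →₀ ℕ)
    (hc : ∀ l, Finsupp.single l m ∈ S) (he : 1 ≤ e) (hme : m ≤ e - 1) :
    hilb k r (pairingIdeal e (ptFun k S q)) 1 = r := by
  have hm' : (m : k) ≠ 0 := Nat.cast_ne_zero.2 hm
  have hX : ∀ c : Fin r → k, (∑ l, C (c l) * X l : MvPolynomial (Fin r) k).IsHomogeneous 1 :=
    fun c => IsHomogeneous.sum _ _ 1 fun l _ => isHomogeneous_C_mul_X _ _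
  have hlin : ∀ f : MvPolynomial (Fin r) k, f.IsHomogeneous 1 →
      ∃ c : Fin r → k, f = ∑ l, C (c l) * X l := by
    intro f hf
    have h1 : f ∈ Submodule.span k (Set.range (X : Fin r → MvPolynomial (Fin r) k)) := by
      rw [← homogeneousSubmodule_one_eq_span_X]; exact hf
    obtain ⟨c, hc⟩ := (Submodule.mem_span_range_iff_exists_fun k).1 h1
    exact ⟨c, by simp [← hc, smul_eq_C_mul]⟩
  have hev : ∀ (c : Fin r → k) (l : Fin r),
      eval (latPt k (Finsupp.single l m)) (∑ l, C (c l) * X l) = c l * m := by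
    intro c l
    simp [latPt, Finsupp.single_apply]
  rw [hilb_eq (V := Fin r → k)
    (LinearMap.pi fun l => (aeval (latPt k (Finsupp.single l m))).toLinearMap)]
  · simp
  · intro f hf
    rw [mem_iff_vanish hm hS q he hme hf]
    constructor
    · intro h
      ext l
      simpa [aeval_eq_eval] using h _ (hc l)
    · intro h a _
      obtain ⟨c, rfl⟩ := hlin f hf
      have hc0 : ∀ l, c l = 0 := by
        intro l
        have h1 := congrFun h l
        rw [LinearMap.pi_apply, AlgHom.toLinearMap_apply, aeval_eq_eval] at h1
        have h2 : c l * m = 0 := (hev c l).symm.trans h1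
        exact (mul_eq_zero.1 h2).resolve_right hm'
      simp [hc0]
  · intro v
    refine ⟨∑ l, C (v l / m) * X l, hX _, ?_⟩
    ext l
    rw [LinearMap.pi_apply, AlgHom.toLinearMap_apply, aeval_eq_eval]
    exact (hev _ l).trans (div_mul_cancel₀ _ hm')

lemma hilb_top_s11 (hm : m ≠ 0) (hS : ∀ a ∈ S, ∑ l, a l = m) {q q' : Fin r →₀ ℕ}
    (hq : q ∈ S) (hq' : q' ∈ S) (hqq : q' ≠ q) (hme : m ≤ e) :
    hilb k r (pairingIdeal e (ptFun k S q)) e = 2 := by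
  rw [hilb_eq (V := Fin 2 → k) (LinearMap.pi fun t => ptFun k S q t)]
  · simp
  · intro f hf
    rw [mem_pairingIdeal_of_hom hf le_rfl, Nat.sub_self, funext_iff]
    refine forall_congr' fun t => ?_
    rw [LinearMap.pi_apply, Pi.zero_apply]
    constructor
    · intro h
      simpa using h 1 (isHomogeneous_one _ _)
    · intro h g hg
      rw [totalDegree_eq_zero_iff_eq_C.1 ((totalDegree_zero_iff_isHomogeneous _).2 hg), mul_comm,
        ← smul_eq_C_mul, map_smul, h, smul_zero]
  · intro v
    obtain ⟨f, hf, hv⟩ := exists_interp (k := k) hm hme S hS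
      (fun a => if a = q then v 1 else if a = q' then v 0 else 0)
    refine ⟨f, hf, ?_⟩
    ext t
    rw [LinearMap.pi_apply, ptFun_apply]
    fin_cases t
    · rw [Finset.sum_eq_single q']
      · simp [hv q' hq', hqq]
      · intro a ha haq
        rw [hv a ha, if_neg haq]
        by_cases h : a = q <;> simp [h]
      · exact fun h => absurd hq' h
    · rw [Finset.sum_eq_single q]
      · simp [hv q hq]
      · intro a ha haq
        simp [haq]
      · exact fun h => absurd hq h

/-- In degree `e - 1` a form `f` is in the ideal iff `∑_a f(a) a = 0` in `k^r`. The separation of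
coordinates between `single z m` and the rest of `S` makes the two functionals amount to a single
vector condition. -/
lemma hilb_pred_s11 (hm : m ≠ 0) (hS : ∀ a ∈ S, ∑ l, a l = m)
    (hz : ∀ a ∈ S, a = Finsupp.single z m ∨ a z = 0)
    (hc : ∀ l, Finsupp.single l m ∈ S) (he : 1 ≤ e) (hme : m ≤ e - 1) :
    hilb k r (pairingIdeal e (ptFun k S (Finsupp.single z m))) (e - 1) = r := by
  have hm' : (m : k) ≠ 0 := Nat.cast_ne_zero.2 hm
  set T : MvPolynomial (Fin r) k →ₗ[k] (Fin r → k) :=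
    LinearMap.pi fun l => ∑ a ∈ S, (a l : k) • (aeval (latPt k a)).toLinearMap with hT
  have hTa : ∀ f l, T f l = ∑ a ∈ S, (a l : k) * eval (latPt k a) f := by
    intro f l
    simp [hT, LinearMap.sum_apply, aeval_eq_eval]
  have key : ∀ f l t, ptFun k S (Finsupp.single z m) t (f * X l) =
      if t = 1 ↔ l = z then T f l else 0 := by
    intro f l t
    rw [ptFun_apply, hTa]
    have h1 : ∀ a ∈ S, (if t = 1 ↔ a = Finsupp.single z m then eval (latPt k a) (f * X l) else 0)
        = if t = 1 ↔ l = z then (a l : k) * eval (latPt k a) f else 0 := by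
      intro a ha
      rw [map_mul, eval_X, mul_comm]
      simp only [latPt]
      by_cases haq : a = Finsupp.single z m
      · by_cases hlz : l = z
        · simp [haq, hlz]
        · have : a l = 0 := by rw [haq, Finsupp.single_eq_of_ne hlz]
          simp [this]
      · by_cases hlz : l = z
        · have : a l = 0 := by rw [hlz]; exact (hz a ha).resolve_left haq
          simp [this]
        · simp [haq, hlz]
    rw [Finset.sum_congr rfl h1]
    split_ifs <;> simp
  rw [hilb_eq (V := Fin r → k) T]
  · simp
  · intro f hf
    rw [mem_pairingIdeal_of_hom hf (Nat.sub_le e 1), Nat.sub_sub_self he]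
    constructor
    · intro h
      ext l
      have h1 := h (if l = z then 1 else 0) (X l) (isHomogeneous_X k l)
      rw [key, if_pos (by by_cases hq : l = z <;> simp [hq])] at h1
      exact h1
    · intro h t g hg
      have h1 : g ∈ Submodule.span k (Set.range (X : Fin r → MvPolynomial (Fin r) k)) := by
        rw [← homogeneousSubmodule_one_eq_span_X]; exact hg
      obtain ⟨c, rfl⟩ := (Submodule.mem_span_range_iff_exists_fun k).1 h1
      rw [Finset.mul_sum, map_sum]
      refine Finset.sum_eq_zero fun l _ => ?_
      rw [mul_smul_comm, map_smul, key, h, Pi.zero_apply, ite_self, smul_zero]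
  · intro v
    -- Prescribe the value `v l / m` at the vertex `single l m` and `0` at the other points.
    obtain ⟨f, hf, hv⟩ := exists_interp (k := k) hm hme S hS
      (fun a => ∑ l, if a = Finsupp.single l m then v l / m else 0)
    refine ⟨f, hf, ?_⟩
    ext l
    rw [hTa, Finset.sum_congr rfl fun a ha => by rw [hv a ha, Finset.mul_sum], Finset.sum_comm,
      Finset.sum_eq_single l]
    · rw [Finset.sum_eq_single (Finsupp.single l m)]
      · rw [if_pos rfl, Finsupp.single_eq_same]
        field_simp
      · intro a _ hal
        rw [if_neg hal, mul_zero]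
      · exact fun h => absurd (hc l) h
    · intro l' _ hl
      refine Finset.sum_eq_zero fun a _ => ?_
      split_ifs with h
      · rw [h, Finsupp.single_eq_of_ne hl.symm, Nat.cast_zero, zero_mul]
      · rw [mul_zero]
    · exact fun h => absurd (Finset.mem_univ l) h

end

/-- A set of `v` lattice points of coordinate sum `m` containing all vertices of the simplex, all of
whose members other than the vertex `single z m` lie on the facet opposite to it. -/
lemma exists_points_s11 {r m v : ℕ} (z : Fin r) (hm : m ≠ 0) (hv1 : r ≤ v)
    (hv2 : v ≤ (r - 2 + m).choose m + 1) (hr : 2 ≤ r) :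
    ∃ S : Finset (Fin r →₀ ℕ), S.card = v ∧ (∀ a ∈ S, ∑ l, a l = m) ∧
      (∀ a ∈ S, a = Finsupp.single z m ∨ a z = 0) ∧ ∀ l, Finsupp.single l m ∈ S := by
  classical
  set B := (Finset.univ.erase z).finsuppAntidiag m with hB
  set V := (Finset.univ.erase z).image fun l : Fin r => Finsupp.single l m with hV
  have hVB : V ⊆ B := by
    intro a ha
    obtain ⟨l, hl, rfl⟩ := Finset.mem_image.1 ha
    refine Finset.mem_finsuppAntidiag.2 ⟨?_, ?_⟩
    · rw [Finset.sum_eq_single l]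
      · simp
      · intro b _ hb
        exact Finsupp.single_eq_of_ne hb
      · exact fun h => absurd hl h
    · exact Finsupp.support_single_subset.trans (Finset.singleton_subset_iff.2 hl)
  have hcz : (Finset.univ.erase z).card = r - 1 := by
    rw [Finset.card_erase_of_mem (Finset.mem_univ z), Finset.card_univ, Fintype.card_fin]
  have hVc : V.card ≤ v - 1 := Finset.card_image_le.trans (by omega)
  have hBc : v - 1 ≤ B.card := by
    rw [hB, Finset.card_finsuppAntidiag_nat_eq_choose, hcz,
      show r - 1 + m - 1 = r - 2 + m by omega]
    omega
  obtain ⟨S, hVS, hSB, hSc⟩ := Finset.exists_subsuperset_card_eq hVB hVc hBc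
  have hSz : ∀ a ∈ S, a z = 0 := by
    intro a ha
    have h := (Finset.mem_finsuppAntidiag.1 (hSB ha)).2
    by_contra h0
    exact (Finset.notMem_erase z _) (h (Finsupp.mem_support_iff.2 h0))
  refine ⟨insert (Finsupp.single z m) S, ?_, ?_, ?_, ?_⟩
  · rw [Finset.card_insert_of_notMem, hSc]
    · omega
    · intro h
      have := hSz _ h
      rw [Finsupp.single_eq_same] at this
      exact hm this
  · intro a ha
    rcases Finset.mem_insert.1 ha with rfl | ha
    · simp [Finsupp.single_apply]
    · have h := (Finset.mem_finsuppAntidiag.1 (hSB ha)).1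
      rw [← Finset.add_sum_erase _ _ (Finset.mem_univ z), hSz a ha, zero_add]
      exact h
  · intro a ha
    rcases Finset.mem_insert.1 ha with rfl | ha
    · exact Or.inl rfl
    · exact Or.inr (hSz a ha)
  · intro l
    by_cases hl : l = z
    · rw [hl]; exact Finset.mem_insert_self _ _
    · exact Finset.mem_insert_of_mem (hVS (Finset.mem_image_of_mem _
        (Finset.mem_erase.2 ⟨hl, Finset.mem_univ l⟩)))

/-- Theorem 3.8 i), existence: for all `2 ≤ r ≤ 5`, `e ≥ 4`, `2 ≤ i ≤ e-2` and
`r ≤ v ≤ min (C(r-2+i, i) + 1) (C(r-2+e-i, e-i) + 1)`, there is a level algebra of type 2,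
codimension `r` and socle degree `e` whose `h`-vector satisfies `h_{e-1} = r`, `h_{e-i} = v`. -/
theorem stmt11 (k : Type) [Field k] [CharZero k] (r e i v : ℕ)
    (hr2 : 2 ≤ r) (hr5 : r ≤ 5) (he : 4 ≤ e) (hi2 : 2 ≤ i) (hie : i ≤ e - 2)
    (hv1 : r ≤ v)
    (hv2 : v ≤ min ((r - 2 + i).choose i + 1) ((r - 2 + (e - i)).choose (e - i) + 1)) :
    ∃ I : Ideal (MvPolynomial (Fin r) k),
      IsLevelQuot k r e 2 I ∧ hilb k r I 1 = r ∧
      hilb k r I (e - 1) = r ∧ hilb k r I (e - i) = v := by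
  -- The bound for the smaller of the two degrees `i` and `e - i` is all that is needed.
  set m := min i (e - i) with hmdef
  have hm : m ≠ 0 := by omega
  have hvm : v ≤ (r - 2 + m).choose m + 1 := by
    rcases min_choice i (e - i) with h | h
    · rw [hmdef, h]; exact hv2.trans (min_le_left _ _)
    · rw [hmdef, h]; exact hv2.trans (min_le_right _ _)
  let z : Fin r := ⟨0, by omega⟩
  let z' : Fin r := ⟨1, by omega⟩
  obtain ⟨S, hSc, hS, hz, hc⟩ := exists_points_s11 z hm hv1 hvm hr2
  have hzz : Finsupp.single z' m ≠ Finsupp.single z m := by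
    intro h
    have h1 := (Finsupp.single_left_inj hm).1 h
    exact absurd (congrArg Fin.val h1) one_ne_zero
  refine ⟨pairingIdeal e (ptFun k S (Finsupp.single z m)),
    ⟨fun f hf d => pairingIdeal_hom hf d, ?_, ?_, pairingIdeal_socle⟩, ?_, ?_, ?_⟩
  · intro d hd
    rw [hilb_eq (V := Fin 0 → k) 0]
    · simp
    · intro f hf
      simp [mem_pairingIdeal_of_lt hf hd]
    · intro v
      exact ⟨0, isHomogeneous_zero _ _ _, Subsingleton.elim _ _⟩
  · exact hilb_top_s11 hm hS (hc z) (hc z') hzz (by omega)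
  · exact hilb_one_s11 hm hS _ hc (by omega) (by omega)
  · exact hilb_pred_s11 hm hS hz hc (by omega) (by omega)
  · rw [hilb_of_le hm hS _ (by omega) (by omega) (by omega), hSc]
end
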